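/- Let H and K be finitely generated subgroups of F(A) with d = rank(K) − rank(H) > 0. Then H is a free factor of K if and only if there exists 0 ≤ d' ≤ d such that Γ_A(H) can be transformed by a sequence of d' i-steps into Γ_A(L) for some subgroup L with rank(L) = rank(H) + d' and L a graphical free factor of K with respect to A. -/

import Mathlib

open Function

/-- A letter of the symmetrized alphabet Ã: `(a, true)` stands for `a ∈ A` and
`(a, false)` for `a⁻¹ ∈ A⁻¹`. -/
abbrev Ltr (A : Type) := A × Bool

/-- Inversion of letters of Ã. -/
def Ltr.inv {A : Type} (x : Ltr A) : Ltr A := (x.1, !x.2)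

/-- The inverse `u⁻¹` of a word `u` over Ã. -/
def wordInv {A : Type} (w : List (Ltr A)) : List (Ltr A) := (w.map Ltr.inv).reverse

/-- A word over Ã is reduced iff it has no factor of the form `a a⁻¹` or `a⁻¹ a`. -/
def IsReducedWord {A : Type} (w : List (Ltr A)) : Prop :=
  ∀ (u v : List (Ltr A)) (a : A) (b : Bool), w ≠ u ++ (a, b) :: (a, !b) :: v

/-- An automaton over the symmetrized alphabet Ã, with a bundled state type `Q`,
an initial state `q0` and a set `E` of transitions. -/
structure Autom (A : Type) : Type 1 where
  Q : Type
  q0 : Q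
  E : Set (Q × Ltr A × Q)

namespace Autom

variable {A : Type}

/-- Paths using only transitions in the set `T`. -/
inductive PathOn (M : Autom A) (T : Set (M.Q × Ltr A × M.Q)) :
    M.Q → List (Ltr A) → M.Q → Prop
  | nil (q : M.Q) : PathOn M T q [] q
  | cons {p q r : M.Q} {a : Ltr A} {w : List (Ltr A)} :
      (p, a, q) ∈ T → PathOn M T q w r → PathOn M T p (a :: w) r

/-- `M.Path p u q` : the word `u` labels a path from state `p` to state `q` in `M`. -/
def Path (M : Autom A) : M.Q → List (Ltr A) → M.Q → Prop := M.PathOn M.E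

/-- The language L(𝒜) of words labeling a path from `q0` to `q0`. -/
def lang (M : Autom A) : Set (List (Ltr A)) := {w | M.Path M.q0 w M.q0}

/-- The set L(𝒜)ρ of reductions (in the free group `F(A)`) of words of L(𝒜). -/
def langRho (M : Autom A) : Set (FreeGroup A) := FreeGroup.mk '' M.lang

/-- Dual automaton: `(p,a,q)` is an edge iff `(q,a⁻¹,p)` is one. -/
def Dual (M : Autom A) : Prop := ∀ p a q, (p, a, q) ∈ M.E ↔ (q, Ltr.inv a, p) ∈ M.E

/-- Deterministic automaton. -/
def Deterministic (M : Autom A) : Prop :=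
  ∀ p a q q', (p, a, q) ∈ M.E → (p, a, q') ∈ M.E → q = q'

/-- Trim automaton: every state lies on a path from `q0` to `q0`. -/
def Trim (M : Autom A) : Prop := ∀ q, ∃ u v, M.Path M.q0 u q ∧ M.Path q v M.q0

/-- Inverse automaton: deterministic, trim and dual. -/
def IsInv (M : Autom A) : Prop := M.Deterministic ∧ M.Trim ∧ M.Dual

/-- Reduced automaton: every state lies on a path from `q0` to `q0` labeled by
a reduced word. -/
def IsRed (M : Autom A) : Prop :=
  ∀ q, ∃ u v, IsReducedWord (u ++ v) ∧ M.Path M.q0 u q ∧ M.Path q v M.q0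

/-- Homomorphisms of automata. -/
def IsHom (M N : Autom A) (φ : M.Q → N.Q) : Prop :=
  φ M.q0 = N.q0 ∧ ∀ p a q, (p, a, q) ∈ M.E → (φ p, a, φ q) ∈ N.E

/-- Isomorphism of automata. -/
def Isomorphic (M N : Autom A) : Prop :=
  ∃ φ : M.Q ≃ N.Q, M.IsHom N φ ∧ N.IsHom M φ.symm

/-- `N` is (isomorphic to) the automaton obtained from `M` by identifying the two
states `p` and `q`. -/
def IsIdentification (M : Autom A) (p q : M.Q) (N : Autom A) : Prop :=
  ∃ φ : M.Q → N.Q,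
    Surjective φ ∧ φ M.q0 = N.q0 ∧
    (∀ x y, φ x = φ y ↔ x = y ∨ (x = p ∧ y = q) ∨ (x = q ∧ y = p)) ∧
    (∀ e : N.Q × Ltr A × N.Q, e ∈ N.E ↔ ∃ e' ∈ M.E, e = (φ e'.1, e'.2.1, φ e'.2.2))

/-- `N` is (isomorphic to) the automaton obtained from `M` by deleting the state `q`
and all transitions involving it. -/
def IsDeletion (M : Autom A) (q : M.Q) (N : Autom A) : Prop :=
  ∃ φ : N.Q → M.Q,
    Injective φ ∧ Set.range φ = {x | x ≠ q} ∧ φ N.q0 = M.q0 ∧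
    (∀ e : N.Q × Ltr A × N.Q, e ∈ N.E ↔ (φ e.1, e.2.1, φ e.2.2) ∈ M.E)

/-- Elementary reduction of type 1. -/
def Red1 (M N : Autom A) : Prop :=
  ∃ p q r a, p ≠ q ∧ (r, a, p) ∈ M.E ∧ (r, a, q) ∈ M.E ∧ M.IsIdentification p q N

/-- Elementary reduction of type 2. -/
def Red2 (M N : Autom A) : Prop :=
  ∃ (p q : M.Q) (a : Ltr A), q ≠ M.q0 ∧ (p, a, q) ∈ M.E ∧ (q, Ltr.inv a, p) ∈ M.E ∧
    (∀ e ∈ M.E, e.1 = q ∨ e.2.2 = q → e = (p, a, q) ∨ e = (q, Ltr.inv a, p)) ∧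
    M.IsDeletion q N

/-- `N` is (isomorphic to) the reduction `Mρ` of `M`: perform elementary reductions
of type 1 until the automaton is deterministic, then elementary reductions of type 2
until none is possible. -/
def ReductionOf (M N : Autom A) : Prop :=
  ∃ M₁, Relation.ReflTransGen Red1 M M₁ ∧ M₁.Deterministic ∧
    Relation.ReflTransGen Red2 M₁ N ∧ ∀ N', ¬ Red2 N N'

/-- `N` is (isomorphic to) the expansion of `M` by `(p, w, q)`: a new path labeled `w`
from `p` to `q` (together with its inverse path) whose intermediate states are new. -/
def IsExpansion (M : Autom A) (p : M.Q) (w : List (Ltr A)) (q : M.Q) (N : Autom A) : Prop :=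
  w ≠ [] ∧
  ∃ (φ : M.Q → N.Q) (c : Fin (w.length + 1) → N.Q),
    Injective φ ∧ φ M.q0 = N.q0 ∧ c 0 = φ p ∧ c (Fin.last w.length) = φ q ∧
    (∀ i : Fin (w.length + 1), 0 < (i : ℕ) → (i : ℕ) < w.length → c i ∉ Set.range φ) ∧
    (∀ i j : Fin (w.length + 1), 0 < (i : ℕ) → (i : ℕ) < w.length → c i = c j → i = j) ∧
    (∀ x : N.Q, (∃ y, φ y = x) ∨ ∃ i, c i = x) ∧
    (∀ e : N.Q × Ltr A × N.Q, e ∈ N.E ↔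
      ((∃ e' ∈ M.E, e = (φ e'.1, e'.2.1, φ e'.2.2)) ∨
        ∃ i : Fin w.length,
          e = (c i.castSucc, w.get i, c i.succ) ∨
          e = (c i.succ, Ltr.inv (w.get i), c i.castSucc)))

/-- `M →exp^{(p,w,q)} N` : `N` is (isomorphic to) the reduction of the expansion
of `M` by `(p,w,q)`. -/
def ExpStep (M : Autom A) (p : M.Q) (w : List (Ltr A)) (q : M.Q) (N : Autom A) : Prop :=
  ∃ N' N'', M.IsExpansion p w q N' ∧ ReductionOf N' N'' ∧ Isomorphic N'' N

/-- `M →re^{(p,w,q)} N` : a reduced expansion, i.e. an expansion-then-reduction in which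
`M` embeds in `N`. -/
def REStep (M : Autom A) (p : M.Q) (w : List (Ltr A)) (q : M.Q) (N : Autom A) : Prop :=
  M.ExpStep p w q N ∧ ∃ ψ : M.Q → N.Q, Injective ψ ∧ M.IsHom N ψ

/-- `M →e^{w} N` : an e-step, i.e. `M →exp^{(q0,w,q0)} N`. -/
def EStep (M : Autom A) (w : List (Ltr A)) (N : Autom A) : Prop :=
  M.ExpStep M.q0 w M.q0 N

/-- `M →i^{p=q} N` : an i-step; `N` is (isomorphic to) the reduction of the automaton
obtained from `M` by identifying the distinct states `p` and `q`. -/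
def IStep (M : Autom A) (p q : M.Q) (N : Autom A) : Prop :=
  p ≠ q ∧ ∃ N' N'', M.IsIdentification p q N' ∧ ReductionOf N' N'' ∧ Isomorphic N'' N

/-- i-step, allowing `p = q` (in which case nothing happens). -/
def IStep' (M : Autom A) (p q : M.Q) (N : Autom A) : Prop :=
  (p = q ∧ M.Isomorphic N) ∨ M.IStep p q N

/-- `M →i N` : some i-step applies. -/
def IStepAny (M N : Autom A) : Prop := ∃ p q, M.IStep p q N

/-- Some reduced expansion (by a nonempty reduced word) applies. -/
def REStepAny (M N : Autom A) : Prop :=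
  ∃ p w q, IsReducedWord w ∧ M.REStep p w q N

/-- `M` is (isomorphic to) `Γ_A(H)` : a reduced inverse automaton with `L(M)ρ = H`. -/
def Represents (M : Autom A) (H : Subgroup (FreeGroup A)) : Prop :=
  M.IsInv ∧ M.IsRed ∧ M.langRho = ↑H

/-- The `q0`-diameter of an automaton: the maximum over all states `q` of the minimal
length of a reduced word labeling a path from `q0` to `q`. -/
noncomputable def diam (M : Autom A) : ℕ :=
  ⨆ q : M.Q, sInf {n | ∃ u, IsReducedWord u ∧ u.length = n ∧ M.Path M.q0 u q}

end Autom

/-- `S` is a basis of the subgroup `H`: `S` generates `H` and freely so. -/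
def IsFreeBasis {G : Type} [Group G] (S : Set G) (H : Subgroup G) : Prop :=
  Subgroup.closure S = H ∧
    Injective (FreeGroup.lift (Subtype.val : S → G) : FreeGroup S →* G)

/-- `H ≤ff K` : `H` is a free factor of `K`. -/
def FreeFactor {G : Type} [Group G] (H K : Subgroup G) : Prop :=
  ∃ B C : Set G, IsFreeBasis B H ∧ IsFreeBasis C K ∧ B ⊆ C

/-- The rank of a subgroup: the cardinality of a basis (the common value of
the cardinalities of all bases, when `H` is a finite-rank free group). -/
noncomputable def rk {G : Type} [Group G] (H : Subgroup G) : ℕ :=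
  sInf {n | ∃ S : Set G, IsFreeBasis S H ∧ S.ncard = n}

/-- `L` is a graphical free factor of `K` with respect to `A`: `Γ_A(L)` embeds
in `Γ_A(K)`. -/
def GraphicalFF {A : Type} (L K : Subgroup (FreeGroup A)) : Prop :=
  L ≤ K ∧ ∃ ML MK : Autom A, ML.Represents L ∧ MK.Represents K ∧
    ∃ ψ : ML.Q → MK.Q, Injective ψ ∧ ML.IsHom MK ψ

/-- A step (i-step or reduced expansion) from `M` to `N` of cost `c`. -/
def StepCost {A : Type} (M N : Autom A) (c : ℕ) : Prop :=
  (c = 0 ∧ Autom.IStepAny M N) ∨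
  (∃ p w q, IsReducedWord w ∧ w.length = c ∧ M.REStep p w q N)

/-- The well-order `≺` on cost sequences. -/
def costLT (k l : List ℕ) : Prop :=
  k.length < l.length ∨
  (k.length = l.length ∧ k.sum < l.sum) ∨
  (k.length = l.length ∧ k.sum = l.sum ∧ List.Lex (· < ·) k l)

/-!
The core tree of a subgroup `L` is the union of the `L`-translates of the paths in the Cayley tree
traced by the reduced words for elements of `L`; the Stallings automaton of `L` is its quotient by
`L`. Identifying two states and reducing adjoins to `L` a single element `x * y⁻¹`, where `x` and
`y` lie in the core tree and lead to the two states.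

Free groups of finite rank are Hopfian, so a subgroup which is generated by `H` and `k` further
elements and has rank `rk H + k` contains `H` as a free factor. If the automaton of `L` embeds in
that of `K`, then a Schreier transversal of the former extends to one of the latter, and the
Schreier bases show that `L` is a free factor of `K`. Both facts together handle the direction from
i-steps to free factors.

For the converse, let `K` be generated by `L` and `k` further elements. If the automaton of `L` does
not embed in that of `K`, then some identification of two of its states lowers `k`. Iterating this
leads to an automaton that embeds, and counting ranks shows that no generator has been wasted.
-/

section WordsInFreeGroups

variable {A : Type}

/-- The element of the free group given by a letter of the symmetrized alphabet. -/
def Ltr.toFreeGroup (x : Ltr A) : FreeGroup A := FreeGroup.mk [x]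

theorem Ltr.inv_inv (x : Ltr A) : x.inv.inv = x := by simp [Ltr.inv]

theorem Ltr.inv_ne_self (x : Ltr A) : x.inv ≠ x := fun h => by simp [Ltr.inv, Prod.ext_iff] at h

theorem Ltr.toFreeGroup_inv (x : Ltr A) : x.inv.toFreeGroup = x.toFreeGroup⁻¹ := rfl

theorem mk_nil : FreeGroup.mk ([] : List (Ltr A)) = 1 := rfl

theorem mk_singleton (x : Ltr A) : FreeGroup.mk [x] = x.toFreeGroup := rfl

theorem mk_append (V W : List (Ltr A)) :
    FreeGroup.mk (V ++ W) = FreeGroup.mk V * FreeGroup.mk W := FreeGroup.mul_mk.symm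

theorem mk_cons (x : Ltr A) (W : List (Ltr A)) :
    FreeGroup.mk (x :: W) = x.toFreeGroup * FreeGroup.mk W := mk_append [x] W

end WordsInFreeGroups

section Hopf

theorem finite_monoidHom_of_fg {G Q : Type*} [Group G] [Group.FG G] [Group Q] [Finite Q] :
    Finite (G →* Q) := by
  obtain ⟨S, hS⟩ := Group.fg_def.1 ‹Group.FG G›
  exact Finite.of_injective (fun (χ : G →* Q) (s : S) => χ s) fun χ χ' h =>
    MonoidHom.eq_of_eqOn_dense hS fun s hs => congrFun h ⟨s, hs⟩

/-- Malcev's theorem: precomposition with a surjective `f` permutes the finite set of homomorphisms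
to a finite group, so every such homomorphism factors through `f` and kills `f.ker`. -/
theorem injective_of_surjective_of_residuallyFinite {G : Type*} [Group G] [Group.FG G]
    [Group.ResiduallyFinite G] (f : G →* G) (hf : Surjective f) : Injective f := by
  rw [injective_iff_map_eq_one]
  refine fun g hg => Group.eq_one_iff_forall_finiteIndexNormalSubroup g fun N => ?_
  have := finite_monoidHom_of_fg (G := G) (Q := G ⧸ N.toSubgroup)
  have precomp_injective : Injective fun χ : G →* G ⧸ N.toSubgroup => χ.comp f :=
    fun χ χ' h => (MonoidHom.cancel_right hf).1 h
  obtain ⟨χ, hχ⟩ := Finite.injective_iff_surjective.1 precomp_injective (QuotientGroup.mk' _)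
  have : QuotientGroup.mk' N.toSubgroup g = 1 := by
    rw [← hχ, MonoidHom.comp_apply, hg, map_one]
  rwa [QuotientGroup.mk'_apply, QuotientGroup.eq_one_iff] at this

theorem exists_perm_extending_mul {G : Type*} [Group G] (F : Set G) [Finite F] (a : G) :
    ∃ π : Equiv.Perm F, ∀ s t : F, (t : G) = a * s → π s = t := by
  classical
  let e : {s : F // a * (s : G) ∈ F} ≃ {s : F // a⁻¹ * (s : G) ∈ F} :=
    { toFun := fun s => ⟨⟨_, s.2⟩, by simp⟩
      invFun := fun s => ⟨⟨_, s.2⟩, by simp⟩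
      left_inv := fun s => by ext; simp
      right_inv := fun s => by ext; simp }
  have := Fintype.ofFinite F
  refine ⟨e.extendSubtype, fun s t h => ?_⟩
  rw [Equiv.extendSubtype_apply_of_mem e s (by rw [← h]; exact t.2)]
  exact Subtype.ext h.symm

/-- The generators act on the finite set of suffixes of a word `W` by partial left multiplications;
extended to permutations, they make `mk W` move the empty suffix to `W`. -/
theorem exists_finite_perm_ne_one {A : Type} {g : FreeGroup A} (hg : g ≠ 1) :
    ∃ (F : Set (FreeGroup A)) (_ : Finite F) (ρ : FreeGroup A →* Equiv.Perm F), ρ g ≠ 1 := by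
  obtain ⟨W, rfl⟩ := Quot.exists_rep g
  rw [FreeGroup.quot_mk_eq_mk] at hg ⊢
  let F : Set (FreeGroup A) := FreeGroup.mk '' {V | V <:+ W}
  have memF {V : List (Ltr A)} (hV : V <:+ W) : FreeGroup.mk V ∈ F := ⟨V, hV, rfl⟩
  have hF : Finite F := by
    have : {V | V <:+ W} = {V | V ∈ W.tails} := by simp
    exact (this ▸ W.tails.finite_toSet).image _
  choose π hπ using fun a => exists_perm_extending_mul F (FreeGroup.of a)
  refine ⟨F, hF, FreeGroup.lift π, fun h => hg ?_⟩
  have suffix_reached (V : List (Ltr A)) (hV : V <:+ W) :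
      FreeGroup.lift π (FreeGroup.mk V) ⟨1, memF List.nil_suffix⟩ = ⟨_, memF hV⟩ := by
    induction V with
    | nil => rfl
    | cons x V ih =>
      have hV' := (List.suffix_cons x V).trans hV
      simp only [mk_cons, map_mul, Equiv.Perm.mul_apply, ih hV']
      obtain ⟨a, _ | _⟩ := x
      · change (FreeGroup.lift π (FreeGroup.of a)⁻¹) _ = _
        rw [map_inv, FreeGroup.lift_apply_of, Equiv.Perm.inv_eq_iff_eq]
        exact (hπ a _ _ (mul_inv_cancel_left _ _).symm).symm
      · change (FreeGroup.lift π (FreeGroup.of a)) _ = _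
        rw [FreeGroup.lift_apply_of]
        exact hπ a _ _ rfl
  have := suffix_reached W List.suffix_rfl
  rw [h] at this
  exact (congrArg Subtype.val this).symm

instance {A : Type} : Group.ResiduallyFinite (FreeGroup A) :=
  Group.residuallyFinite_of_forall_exists_finite_monoidHom fun _ hg =>
    let ⟨F, _, ρ, hρ⟩ := exists_finite_perm_ne_one hg
    ⟨Equiv.Perm F, inferInstance, inferInstance, ρ, hρ⟩

end Hopf

section FreeBases

variable {G : Type} [Group G]

theorem mk_le_of_surjective_freeGroup {α β : Type} (f : FreeGroup α →* FreeGroup β)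
    (hf : Surjective f) : Cardinal.mk β ≤ Cardinal.mk α := by
  let F : FreeAbelianGroup α →ₗ[ℤ] FreeAbelianGroup β :=
    (MonoidHom.toAdditive (Abelianization.map f)).toIntLinearMap
  have hF : Surjective F := fun y => by
    obtain ⟨y, rfl⟩ := QuotientGroup.mk_surjective y
    obtain ⟨x, rfl⟩ := hf y
    exact ⟨Abelianization.of x, rfl⟩
  rw [(FreeAbelianGroup.basis α).mk_eq_rank'', (FreeAbelianGroup.basis β).mk_eq_rank'']
  exact LinearMap.rank_le_of_surjective F hF

namespace IsFreeBasis

variable {S : Set G} {H : Subgroup G}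

theorem subset (h : IsFreeBasis S H) : S ⊆ H := h.1 ▸ Subgroup.subset_closure

/-- The isomorphism from the free group on a basis of `H` onto `H`. -/
noncomputable def freeGroupEquiv (h : IsFreeBasis S H) : FreeGroup S ≃* H :=
  (MonoidHom.ofInjective h.2).trans
    (MulEquiv.subgroupCongr (by rw [← h.1, FreeGroup.closure_eq_range]))

theorem coe_freeGroupEquiv_of (h : IsFreeBasis S H) (s : S) :
    (h.freeGroupEquiv (FreeGroup.of s) : G) = s :=
  FreeGroup.lift_apply_of

theorem freeGroupEquiv_of (h : IsFreeBasis S H) (s : S) :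
    h.freeGroupEquiv (FreeGroup.of s) = ⟨s, h.subset s.2⟩ :=
  Subtype.ext (h.coe_freeGroupEquiv_of s)

theorem exists_hom_extending {N : Type*} [Group N] (h : IsFreeBasis S H) (f : S → N) :
    ∃ φ : H →* N, ∀ s : S, φ ⟨s, h.subset s.2⟩ = f s :=
  ⟨(FreeGroup.lift f).comp h.freeGroupEquiv.symm.toMonoidHom, fun s => by
    simp [← h.freeGroupEquiv_of]⟩

theorem hom_ext {N : Type*} [Group N] (h : IsFreeBasis S H) {φ ψ : H →* N}
    (hS : ∀ s : S, φ ⟨s, h.subset s.2⟩ = ψ ⟨s, h.subset s.2⟩) : φ = ψ :=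
  (MonoidHom.cancel_right h.freeGroupEquiv.surjective).1 <|
    (FreeGroup.ext_hom _ _ fun s => by simp [h.freeGroupEquiv_of, hS] :
      φ.comp h.freeGroupEquiv.toMonoidHom = ψ.comp h.freeGroupEquiv.toMonoidHom)

theorem of_family {ι : Type} {f : ι → G} (hcl : Subgroup.closure (Set.range f) = H)
    (hf : Injective (FreeGroup.lift f)) : IsFreeBasis (Set.range f) H := by
  have f_injective : Injective f := fun i j hij =>
    FreeGroup.of_injective (hf (by simpa using hij))
  let e := FreeGroup.freeGroupCongr (Equiv.ofInjective f f_injective)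
  have lift_eq : (FreeGroup.lift (Subtype.val : Set.range f → G)) ∘ e = FreeGroup.lift f :=
    congrArg DFunLike.coe (FreeGroup.ext_hom _ _ fun i => by simp [e] :
      (FreeGroup.lift (Subtype.val : Set.range f → G)).comp e.toMonoidHom = FreeGroup.lift f)
  exact ⟨hcl, (Injective.of_comp_iff' _ e.bijective).1 (lift_eq ▸ hf)⟩

theorem of_family_of_hom {ι : Type} {f : ι → H} {φ : H →* FreeGroup ι}
    (hcl : Subgroup.closure (Set.range fun i => (f i : G)) = H)
    (hφ : ∀ i, φ (f i) = FreeGroup.of i) : IsFreeBasis (Set.range fun i => (f i : G)) H := by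
  refine of_family hcl ?_
  have left_inverse : φ.comp (FreeGroup.lift f) = MonoidHom.id _ :=
    FreeGroup.ext_hom _ _ fun i => by simp [hφ]
  have lift_coe : FreeGroup.lift (fun i => (f i : G)) = H.subtype.comp (FreeGroup.lift f) :=
    FreeGroup.ext_hom _ _ fun i => by simp
  rw [lift_coe]
  exact H.subtype_injective.comp (LeftInverse.injective (DFunLike.congr_fun left_inverse))

theorem rk_eq (h : IsFreeBasis S H) : rk H = S.ncard := by
  have : {n | ∃ S : Set G, IsFreeBasis S H ∧ S.ncard = n} = {S.ncard} := by
    refine Set.eq_singleton_iff_unique_mem.2 ⟨⟨S, h, rfl⟩, ?_⟩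
    rintro _ ⟨S', h', rfl⟩
    exact Nat.card_congr (Equiv.ofFreeGroupEquiv (h'.freeGroupEquiv.trans h.freeGroupEquiv.symm))
  rw [rk, this, csInf_singleton]

theorem exists_surjective_of_closure_range {ι : Type} (h : IsFreeBasis S H) {f : ι → G}
    (hf : Subgroup.closure (Set.range f) = H) :
    ∃ φ : FreeGroup ι →* FreeGroup S, Surjective φ ∧
      ∀ x y, FreeGroup.lift f x = FreeGroup.lift f y → φ x = φ y := by
  have range_eq : (FreeGroup.lift f).range = H := by rw [FreeGroup.range_lift_eq_closure, hf]
  let φ : FreeGroup ι →* H :=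
    (MulEquiv.subgroupCongr range_eq).toMonoidHom.comp (FreeGroup.lift f).rangeRestrict
  exact ⟨h.freeGroupEquiv.symm.toMonoidHom.comp φ,
    h.freeGroupEquiv.symm.surjective.comp
      ((MulEquiv.subgroupCongr range_eq).surjective.comp
        (FreeGroup.lift f).rangeRestrict_surjective),
    fun x y hxy => congrArg h.freeGroupEquiv.symm (Subtype.ext hxy : φ x = φ y)⟩

theorem finite_of_closure_range {ι : Type} [Finite ι] (h : IsFreeBasis S H) {f : ι → G}
    (hf : Subgroup.closure (Set.range f) = H) : S.Finite := by
  obtain ⟨φ, hφ, -⟩ := h.exists_surjective_of_closure_range hf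
  exact Cardinal.lt_aleph0_iff_finite.1
    ((mk_le_of_surjective_freeGroup φ hφ).trans_lt (Cardinal.mk_lt_aleph0))

theorem rk_le_of_closure_range {ι : Type} [Finite ι] (h : IsFreeBasis S H) {f : ι → G}
    (hf : Subgroup.closure (Set.range f) = H) : rk H ≤ Nat.card ι := by
  obtain ⟨φ, hφ, -⟩ := h.exists_surjective_of_closure_range hf
  rw [h.rk_eq]
  exact Cardinal.toNat_le_toNat (mk_le_of_surjective_freeGroup φ hφ) Cardinal.mk_lt_aleph0

theorem of_closure_range_of_card_eq {ι : Type} [Finite ι] (h : IsFreeBasis S H) {f : ι → G}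
    (hf : Subgroup.closure (Set.range f) = H) (hι : Nat.card ι = rk H) :
    IsFreeBasis (Set.range f) H := by
  refine of_family hf fun x y hxy => ?_
  obtain ⟨φ, hφ, hφf⟩ := h.exists_surjective_of_closure_range hf
  have := (h.finite_of_closure_range hf).to_subtype
  obtain ⟨e⟩ : Nonempty (S ≃ ι) := Finite.card_eq.1 (by rw [hι, h.rk_eq]; rfl)
  let e' := FreeGroup.freeGroupCongr e
  have : Injective (e'.toMonoidHom.comp φ) :=
    injective_of_surjective_of_residuallyFinite _ (e'.surjective.comp hφ)
  exact this (congrArg e' (hφf x y hxy))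

theorem finite_of_fg (h : IsFreeBasis S H) (hH : H.FG) : S.Finite := by
  obtain ⟨T, hT⟩ := hH
  exact h.finite_of_closure_range (f := fun t : T => (t : G)) (by simpa using hT)

end IsFreeBasis

theorem exists_isFreeBasis [IsFreeGroup G] (H : Subgroup G) :
    ∃ S, IsFreeBasis S H := by
  let e := IsFreeGroup.toFreeGroup H
  refine ⟨_, IsFreeBasis.of_family_of_hom (f := fun i => e.symm (FreeGroup.of i))
    (φ := e.toMonoidHom) ?_ fun i => by simp⟩
  let φ := H.subtype.comp e.symm.toMonoidHom
  calc Subgroup.closure (Set.range fun i => φ (FreeGroup.of i))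
      = (Subgroup.closure (Set.range FreeGroup.of)).map φ := by
        rw [MonoidHom.map_closure, ← Set.range_comp]; rfl
    _ = φ.range := by rw [FreeGroup.closure_range_of, MonoidHom.range_eq_map]
    _ = H := by
        rw [MonoidHom.range_comp, MonoidHom.range_eq_top.2 e.symm.surjective,
          ← MonoidHom.range_eq_map, Subgroup.range_subtype]

end FreeBases

section FreeFactors

variable {G : Type} [Group G] {H K L M : Subgroup G}

theorem IsFreeBasis.union_sdiff {B C C' : Set G} (hB : IsFreeBasis B K) (hC : IsFreeBasis C K)
    (hC' : IsFreeBasis C' M) (hBC' : B ⊆ C') : IsFreeBasis (C ∪ C' \ B) M := by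
  classical
  have hKM : K ≤ M := by rw [← hB.1, ← hC'.1]; exact Subgroup.closure_mono hBC'
  let f : C ⊕ ↥(C' \ B) → M := Sum.elim (fun c => ⟨c, hKM (hC.subset c.2)⟩)
    fun d => ⟨d, hC'.subset d.2.1⟩
  have range_f : (Set.range fun i => (f i : G)) = C ∪ C' \ B := by
    ext; simp [f]
  obtain ⟨χ, hχ⟩ := hC.exists_hom_extending fun c => FreeGroup.of (Sum.inl c : C ⊕ ↥(C' \ B))
  obtain ⟨ψ, hψ⟩ := hC'.exists_hom_extending fun c =>
    if h : (c : G) ∈ B then χ ⟨c, hB.subset h⟩ else FreeGroup.of (Sum.inr ⟨c, c.2, h⟩)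
  have ψ_restrict : ψ.comp (Subgroup.inclusion hKM) = χ := hB.hom_ext fun b => by
    simpa [Subgroup.inclusion] using hψ ⟨b, hBC' b.2⟩
  rw [← range_f]
  refine IsFreeBasis.of_family_of_hom (φ := ψ) ?_ ?_
  · rw [range_f, Subgroup.closure_union, hC.1, ← hB.1, ← Subgroup.closure_union,
      Set.union_sdiff_cancel hBC', hC'.1]
  · rintro (c | d)
    · rw [← hχ, ← ψ_restrict]; rfl
    · simpa [f, d.2.2] using hψ ⟨d, d.2.1⟩

theorem FreeFactor.trans (hHK : FreeFactor H K) (hKM : FreeFactor K M) : FreeFactor H M := by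
  obtain ⟨B, C, hB, hC, hBC⟩ := hHK
  obtain ⟨B', C', hB', hC', hBC'⟩ := hKM
  exact ⟨B, _, hB, hB'.union_sdiff hC hC' hBC', Set.subset_union_of_subset_left hBC _⟩

/-- `K` is generated by `L` together with `k` further elements; the relative version of
being generated by `k` elements. -/
def GeneratedOver (k : ℕ) (L K : Subgroup G) : Prop :=
  ∃ f : Fin k → G, L ⊔ Subgroup.closure (Set.range f) = K

theorem generatedOver_zero_iff : GeneratedOver 0 L K ↔ L = K := by
  simp [GeneratedOver, Set.range_eq_empty]

theorem generatedOver_succ_iff {k : ℕ} :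
    GeneratedOver (k + 1) L K ↔ ∃ t, GeneratedOver k (L ⊔ Subgroup.zpowers t) K := by
  have closure_cons (t : G) (f : Fin k → G) :
      L ⊔ Subgroup.closure (Set.range (Fin.cons t f : Fin (k + 1) → G)) =
        L ⊔ Subgroup.zpowers t ⊔ Subgroup.closure (Set.range f) := by
    rw [Fin.range_cons, Set.insert_eq, Subgroup.closure_union, ← Subgroup.zpowers_eq_closure,
      sup_assoc]
  constructor
  · rintro ⟨f, hf⟩
    exact ⟨f 0, Fin.tail f, by rw [← closure_cons, Fin.cons_self_tail, hf]⟩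
  · rintro ⟨t, f, hf⟩
    exact ⟨Fin.cons t f, by rw [closure_cons, hf]⟩

namespace GeneratedOver

variable {k : ℕ}

theorem sup_zpowers (h : GeneratedOver k L K) (t : G) :
    GeneratedOver (k + 1) L (K ⊔ Subgroup.zpowers t) := by
  obtain ⟨f, rfl⟩ := h
  refine generatedOver_succ_iff.2 ⟨t, f, ?_⟩
  rw [sup_right_comm]

theorem le (h : GeneratedOver k L K) : L ≤ K :=
  let ⟨_, hf⟩ := h
  hf ▸ le_sup_left

theorem fg (h : GeneratedOver k L K) (hL : L.FG) : K.FG := by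
  obtain ⟨f, rfl⟩ := h
  exact hL.sup ⟨(Set.finite_range f).toFinset, by simp⟩

theorem of_isFreeBasis {B C : Set G} (hB : IsFreeBasis B L) (hC : IsFreeBasis C K) (hBC : B ⊆ C)
    (hCfin : C.Finite) (hrk : rk K = rk L + k) : GeneratedOver k L K := by
  have card_sdiff : (C \ B).ncard = k := by
    have := Set.ncard_sdiff_add_ncard_of_subset hBC hCfin
    rw [hB.rk_eq, hC.rk_eq] at hrk
    lia
  have := (hCfin.subset Set.sdiff_subset : (C \ B).Finite).to_subtype
  let e : Fin k ≃ ↥(C \ B) := (Finite.equivFinOfCardEq card_sdiff).symm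
  refine ⟨Subtype.val ∘ e, ?_⟩
  rw [e.surjective.range_comp (Subtype.val : ↥(C \ B) → G), Subtype.range_coe, ← hB.1,
    ← Subgroup.closure_union, Set.union_sdiff_cancel hBC, hC.1]

theorem exists_family {B : Set G} (h : GeneratedOver k L K) (hB : Subgroup.closure B = L) :
    ∃ f : B ⊕ Fin k → G, Subgroup.closure (Set.range f) = K ∧ B ⊆ Set.range f := by
  obtain ⟨f, hf⟩ := h
  refine ⟨Sum.elim Subtype.val f, ?_, ?_⟩
  · rw [Set.Sum.elim_range, Subtype.range_coe, Subgroup.closure_union, hB, hf]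
  · rw [Set.Sum.elim_range, Subtype.range_coe]
    exact Set.subset_union_left

theorem rk_le [IsFreeGroup G] (h : GeneratedOver k L K) (hL : L.FG) : rk K ≤ rk L + k := by
  obtain ⟨B, hB⟩ := exists_isFreeBasis L
  obtain ⟨C, hC⟩ := exists_isFreeBasis K
  obtain ⟨f, hf, -⟩ := h.exists_family hB.1
  have := (hB.finite_of_fg hL).to_subtype
  simpa [hB.rk_eq, Nat.card_sum] using hC.rk_le_of_closure_range hf

theorem freeFactor [IsFreeGroup G] (h : GeneratedOver k L K) (hL : L.FG) (hrk : rk K = rk L + k) :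
    FreeFactor L K := by
  obtain ⟨B, hB⟩ := exists_isFreeBasis L
  obtain ⟨C, hC⟩ := exists_isFreeBasis K
  obtain ⟨f, hf, hBf⟩ := h.exists_family hB.1
  have := (hB.finite_of_fg hL).to_subtype
  exact ⟨B, _, hB,
    hC.of_closure_range_of_card_eq hf (by simp [hrk, hB.rk_eq, Nat.card_sum]), hBf⟩

end GeneratedOver

end FreeFactors

section ReducedWords

variable {A : Type} {V W : List (Ltr A)}

theorem isReduced_cons_cons_iff {x y : Ltr A} :
    FreeGroup.IsReduced (x :: y :: W) ↔ y ≠ x.inv ∧ FreeGroup.IsReduced (y :: W) := by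
  rw [FreeGroup.isReduced_cons_cons]
  obtain ⟨a, _ | _⟩ := x <;> obtain ⟨a', _ | _⟩ := y <;> simp [Ltr.inv, eq_comm]

theorem isReduced_of_append_left (h : FreeGroup.IsReduced (V ++ W)) : FreeGroup.IsReduced V :=
  h.infix (List.prefix_append V W).isInfix

theorem isReduced_of_append_right (h : FreeGroup.IsReduced (V ++ W)) : FreeGroup.IsReduced W :=
  h.infix (List.suffix_append V W).isInfix

theorem isReduced_append (hV : FreeGroup.IsReduced V) (hW : FreeGroup.IsReduced W)
    (hVW : ∀ V' x W', V = V' ++ [x] → W ≠ x.inv :: W') : FreeGroup.IsReduced (V ++ W) := by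
  rcases V.eq_nil_or_concat' with rfl | ⟨V, x, rfl⟩
  · exact hW
  rcases W with _ | ⟨y, W⟩
  · simpa using hV
  rw [List.append_assoc]
  refine List.isChain_append.2 ⟨isReduced_of_append_left hV, ?_, ?_⟩
  · exact isReduced_cons_cons_iff.2 ⟨fun h => hVW V x W rfl (by rw [h]), hW⟩
  · simpa using (List.isChain_append.1 hV).2.2

theorem isReducedWord_iff : IsReducedWord W ↔ FreeGroup.IsReduced W := by
  rw [FreeGroup.isReduced_iff_not_step]
  constructor
  · rintro h _ ⟨⟩
    exact h _ _ _ _ rfl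
  · rintro h U V a b rfl
    exact h _ FreeGroup.Red.Step.not

theorem exists_isReduced_mk_eq (g : FreeGroup A) :
    ∃ W, FreeGroup.IsReduced W ∧ FreeGroup.mk W = g := by
  classical exact ⟨g.toWord, FreeGroup.isReduced_toWord, FreeGroup.mk_toWord⟩

theorem red_of_isReduced_of_mk_eq (hW : FreeGroup.IsReduced W)
    (h : FreeGroup.mk V = FreeGroup.mk W) : FreeGroup.Red V W := by
  classical
  rw [← hW.reduce_eq, ← FreeGroup.reduce.sound h]
  exact FreeGroup.reduce.red

theorem eq_of_isReduced_of_mk_eq (hV : FreeGroup.IsReduced V) (hW : FreeGroup.IsReduced W)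
    (h : FreeGroup.mk V = FreeGroup.mk W) : V = W :=
  (hV.red_iff_eq.1 (red_of_isReduced_of_mk_eq hW h)).symm

theorem isReduced_invRev (hW : FreeGroup.IsReduced W) :
    FreeGroup.IsReduced (FreeGroup.invRev W) := by
  classical
  rw [FreeGroup.isReduced_iff_reduce_eq, FreeGroup.reduce_invRev, hW.reduce_eq]

theorem mk_invRev (W : List (Ltr A)) : FreeGroup.mk (FreeGroup.invRev W) = (FreeGroup.mk W)⁻¹ :=
  FreeGroup.inv_mk.symm

theorem prefix_append_iff {α : Type*} {U V W : List α} :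
    U <+: V ++ W ↔ U <+: V ∨ ∃ T, T <+: W ∧ U = V ++ T := by
  constructor
  · rintro ⟨T, hT⟩
    rcases List.append_eq_append_iff.1 hT with ⟨S, rfl, -⟩ | ⟨S, rfl, rfl⟩
    · exact Or.inl ⟨S, rfl⟩
    · exact Or.inr ⟨S, ⟨T, rfl⟩, rfl⟩
  · rintro (h | ⟨T, hT, rfl⟩)
    · exact h.trans (List.prefix_append V W)
    · exact (List.prefix_append_right_inj V).2 hT

end ReducedWords

section InvariantSubtrees

variable {A : Type} {D : Set (FreeGroup A)} {L K : Subgroup (FreeGroup A)}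

/-- Closure under prefixes of reduced words. If `1 ∈ D` this says that `D` spans a subtree of the
Cayley tree of the free group. -/
def PrefixClosed (D : Set (FreeGroup A)) : Prop :=
  ∀ V W, FreeGroup.IsReduced (V ++ W) → FreeGroup.mk (V ++ W) ∈ D → FreeGroup.mk V ∈ D

/-- The walk in the Cayley tree that starts at `1` and is labelled by `W` stays in `D`. -/
def StaysIn (D : Set (FreeGroup A)) (W : List (Ltr A)) : Prop :=
  ∀ V, V <+: W → FreeGroup.mk V ∈ D

theorem staysIn_append_iff {V W : List (Ltr A)} : StaysIn D (V ++ W) ↔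
    StaysIn D V ∧ ∀ T, T <+: W → FreeGroup.mk V * FreeGroup.mk T ∈ D := by
  simp only [StaysIn, prefix_append_iff, ← mk_append]
  grind

theorem StaysIn.red {V W : List (Ltr A)} (hV : StaysIn D V) (h : FreeGroup.Red V W) :
    StaysIn D W := by
  induction h with
  | refl => exact hV
  | tail _ hstep ih =>
    cases hstep with | @not U₁ U₂ a b => ?_
    have cancel (T : List (Ltr A)) : FreeGroup.mk ((a, b) :: (a, !b) :: T) = FreeGroup.mk T :=
      Quot.sound FreeGroup.Red.Step.cons_not
    rw [staysIn_append_iff] at ih ⊢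
    refine ⟨ih.1, fun T hT => ?_⟩
    exact cancel T ▸ ih.2 ((a, b) :: (a, !b) :: T) (by simpa using hT)

theorem StaysIn.of_isReduced_of_mk_eq {V W : List (Ltr A)} (hV : StaysIn D V)
    (hW : FreeGroup.IsReduced W) (h : FreeGroup.mk V = FreeGroup.mk W) : StaysIn D W :=
  hV.red (red_of_isReduced_of_mk_eq hW h)

theorem StaysIn.mk_mul_mk_mem {W T : List (Ltr A)} (hW : StaysIn D W)
    (hT : T <+: FreeGroup.invRev W) : FreeGroup.mk W * FreeGroup.mk T ∈ D := by
  obtain ⟨U, hTU⟩ := hT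
  have hUT : FreeGroup.invRev U ++ FreeGroup.invRev T = W := by
    rw [← FreeGroup.invRev_append, hTU, FreeGroup.invRev_invRev]
  rw [← hUT, mk_append, mk_invRev T, inv_mul_cancel_right]
  exact hW _ ⟨_, hUT⟩

theorem PrefixClosed.staysIn (hD : PrefixClosed D) {W : List (Ltr A)}
    (hW : FreeGroup.IsReduced W) (hWD : FreeGroup.mk W ∈ D) : StaysIn D W := by
  rintro V ⟨U, rfl⟩
  exact hD V U hW hWD

theorem prefixClosed_of_exists_staysIn
    (h : ∀ g ∈ D, ∃ W, FreeGroup.mk W = g ∧ StaysIn D W) : PrefixClosed D := fun V W hVW hD => by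
  obtain ⟨U, hU, hUD⟩ := h _ hD
  exact hUD.of_isReduced_of_mk_eq hVW hU V (List.prefix_append V W)

/-- `D` spans a subtree of the Cayley tree of the free group that contains `1` and is invariant
under the action of `L` by left multiplication. -/
structure IsInvariantSubtree (L : Subgroup (FreeGroup A)) (D : Set (FreeGroup A)) : Prop where
  one_mem : 1 ∈ D
  mul_mem : ∀ l ∈ L, ∀ x ∈ D, l * x ∈ D
  prefixClosed : PrefixClosed D

/-- The union of the geodesics of the Cayley tree between elements of `L`, that is, the smallest
`L`-invariant subtree. Its quotient by `L` is the Stallings automaton of `L`. -/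
def coreTree (L : Subgroup (FreeGroup A)) : Set (FreeGroup A) :=
  {g | ∃ V W, FreeGroup.IsReduced (V ++ W) ∧ FreeGroup.mk (V ++ W) ∈ L ∧
    g * (FreeGroup.mk V)⁻¹ ∈ L}

namespace IsInvariantSubtree

theorem mem_of_mem (hD : IsInvariantSubtree L D) {l : FreeGroup A} (hl : l ∈ L) : l ∈ D :=
  mul_one l ▸ hD.mul_mem l hl 1 hD.one_mem

theorem mul_mem_iff (hD : IsInvariantSubtree L D) {l x : FreeGroup A} (hl : l ∈ L) :
    l * x ∈ D ↔ x ∈ D :=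
  ⟨fun h => by simpa using hD.mul_mem _ (inv_mem hl) _ h, hD.mul_mem l hl x⟩

theorem mem_iff_of_mul_inv_mem (hD : IsInvariantSubtree L D) {x y : FreeGroup A}
    (h : x * y⁻¹ ∈ L) : x ∈ D ↔ y ∈ D := by
  rw [← hD.mul_mem_iff (x := y) h, inv_mul_cancel_right]

theorem mono (hLK : L ≤ K) (hD : IsInvariantSubtree K D) : IsInvariantSubtree L D :=
  ⟨hD.one_mem, fun l hl => hD.mul_mem l (hLK hl), hD.prefixClosed⟩

theorem coreTree_subset (hD : IsInvariantSubtree L D) : coreTree L ⊆ D := by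
  rintro g ⟨V, W, hVW, hL, hg⟩
  rw [hD.mem_iff_of_mul_inv_mem hg]
  exact hD.prefixClosed V W hVW (hD.mem_of_mem hL)

end IsInvariantSubtree

theorem staysIn_coreTree {W : List (Ltr A)} (hW : FreeGroup.IsReduced W)
    (hWL : FreeGroup.mk W ∈ L) : StaysIn (coreTree L) W := by
  rintro V ⟨U, rfl⟩
  exact ⟨V, U, hW, hWL, by rw [mul_inv_cancel]; exact one_mem L⟩

theorem coreTree_mul_mem {l x : FreeGroup A} (hl : l ∈ L) (hx : x ∈ coreTree L) :
    l * x ∈ coreTree L := by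
  obtain ⟨V, W, hVW, hL, hx⟩ := hx
  exact ⟨V, W, hVW, hL, by simpa [mul_assoc] using mul_mem hl hx⟩

theorem coreTree_prefixClosed : PrefixClosed (coreTree L) := by
  refine prefixClosed_of_exists_staysIn fun x ⟨V, W, hVW, hL, hx⟩ => ?_
  obtain ⟨U, hU, hUx⟩ := exists_isReduced_mk_eq (x * (FreeGroup.mk V)⁻¹)
  refine ⟨U ++ V, by rw [mk_append, hUx, inv_mul_cancel_right], staysIn_append_iff.2
    ⟨staysIn_coreTree hU (hUx ▸ hx), fun T hT => ?_⟩⟩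
  rw [hUx]
  exact coreTree_mul_mem hx (staysIn_coreTree hVW hL T (hT.trans (List.prefix_append V W)))

theorem isInvariantSubtree_coreTree : IsInvariantSubtree L (coreTree L) :=
  ⟨staysIn_coreTree .nil (one_mem L) [] List.nil_prefix, fun _ hl _ => coreTree_mul_mem hl,
    coreTree_prefixClosed⟩

theorem coreTree_mono (hLK : L ≤ K) : coreTree L ⊆ coreTree K :=
  (isInvariantSubtree_coreTree.mono hLK).coreTree_subset

theorem exists_staysIn_of_mem_closure {S : Set (FreeGroup A)}
    (hone : 1 ∈ D) (hmul : ∀ l ∈ Subgroup.closure S, ∀ x ∈ D, l * x ∈ D)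
    (hS : ∀ s ∈ S, ∃ W, FreeGroup.mk W = s ∧ StaysIn D W) {l : FreeGroup A}
    (hl : l ∈ Subgroup.closure S) : ∃ W, FreeGroup.mk W = l ∧ StaysIn D W := by
  induction hl using Subgroup.closure_induction with
  | mem s hs => exact hS s hs
  | one => exact ⟨[], rfl, fun V hV => by rwa [List.prefix_nil.1 hV]⟩
  | mul g h hg hh ihg ihh =>
    obtain ⟨V, rfl, hVD⟩ := ihg
    obtain ⟨W, rfl, hWD⟩ := ihh
    exact ⟨V ++ W, mk_append V W,
      staysIn_append_iff.2 ⟨hVD, fun T hT => hmul _ hg _ (hWD T hT)⟩⟩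
  | inv g hg ih =>
    obtain ⟨W, rfl, hWD⟩ := ih
    refine ⟨FreeGroup.invRev W, mk_invRev W, fun V hV => ?_⟩
    have := hmul _ (inv_mem hg) _ (hWD.mk_mul_mk_mem hV)
    rwa [inv_mul_cancel_left] at this

theorem coreTree_closure_subset {S : Set (FreeGroup A)}
    (hone : 1 ∈ D) (hmul : ∀ l ∈ Subgroup.closure S, ∀ x ∈ D, l * x ∈ D)
    (hS : ∀ s ∈ S, ∃ W, FreeGroup.mk W = s ∧ StaysIn D W) :
    coreTree (Subgroup.closure S) ⊆ D := by
  rintro g ⟨V, W, hVW, hL, hg⟩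
  obtain ⟨U, hU, hUD⟩ := exists_staysIn_of_mem_closure hone hmul hS hL
  have := hmul _ hg _ (hUD.of_isReduced_of_mk_eq hVW hU V (List.prefix_append V W))
  rwa [inv_mul_cancel_right] at this

end InvariantSubtrees

section Adjoining

variable {A : Type} {D : Set (FreeGroup A)} {L K M : Subgroup (FreeGroup A)} {u v g : FreeGroup A}
  {w : List (Ltr A)}

/-- The map from the quotient of `D` by `L` to the right cosets of `K` is injective. For
`D = coreTree L` and `L ≤ K` this says that the Stallings automaton of `L` embeds in that
of `K`. -/
def QuotientEmbeds (D : Set (FreeGroup A)) (L K : Subgroup (FreeGroup A)) : Prop :=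
  ∀ x ∈ D, ∀ y ∈ D, x * y⁻¹ ∈ K → x * y⁻¹ ∈ L

theorem QuotientEmbeds.trans (hLM : L ≤ M) (h : QuotientEmbeds (coreTree L) L M)
    (h' : QuotientEmbeds (coreTree M) M K) : QuotientEmbeds (coreTree L) L K :=
  fun x hx y hy hxy => h x hx y hy (h' x (coreTree_mono hLM hx) y (coreTree_mono hLM hy) hxy)

theorem exists_of_mem_coreTree_sup_zpowers (hu : u ∈ coreTree L) (hv : v ∈ coreTree L)
    (hg : g ∈ coreTree (L ⊔ Subgroup.zpowers (u * FreeGroup.mk w * v⁻¹))) :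
    ∃ x, (x ∈ coreTree L ∨ ∃ T, T <+: w ∧ T ≠ w ∧ x = u * FreeGroup.mk T) ∧
      g * x⁻¹ ∈ L ⊔ Subgroup.zpowers (u * FreeGroup.mk w * v⁻¹) := by
  set t := u * FreeGroup.mk w * v⁻¹
  set D : Set (FreeGroup A) := {g | ∃ x,
    (x ∈ coreTree L ∨ ∃ T, T <+: w ∧ T ≠ w ∧ x = u * FreeGroup.mk T) ∧
      g * x⁻¹ ∈ L ⊔ Subgroup.zpowers t}
  have closure_eq : Subgroup.closure (L ∪ {t}) = L ⊔ Subgroup.zpowers t := by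
    rw [Subgroup.closure_union, Subgroup.closure_eq, Subgroup.zpowers_eq_closure]
  have mul_mem_D : ∀ l ∈ Subgroup.closure (L ∪ {t}), ∀ x ∈ D, l * x ∈ D := by
    rw [closure_eq]
    rintro l hl x ⟨y, hy, hxy⟩
    exact ⟨y, hy, by rw [mul_assoc]; exact mul_mem hl hxy⟩
  have core_subset_D : coreTree L ⊆ D := fun x hx =>
    ⟨x, Or.inl hx, by rw [mul_inv_cancel]; exact one_mem _⟩
  have t_mem : t ∈ Subgroup.closure (L ∪ {t}) := Subgroup.subset_closure (by simp)
  refine coreTree_closure_subset (core_subset_D isInvariantSubtree_coreTree.one_mem) mul_mem_D ?_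
    (closure_eq.symm ▸ hg)
  rintro s (hs | rfl)
  · obtain ⟨W, hW, rfl⟩ := exists_isReduced_mk_eq s
    exact ⟨W, rfl, fun V hV => core_subset_D (staysIn_coreTree hW hs V hV)⟩
  · obtain ⟨U, hU, rfl⟩ := exists_isReduced_mk_eq u
    obtain ⟨V, hV, rfl⟩ := exists_isReduced_mk_eq v
    refine ⟨U ++ w ++ FreeGroup.invRev V, by simp only [mk_append, mk_invRev, t],
      staysIn_append_iff.2 ⟨staysIn_append_iff.2 ⟨fun T hT => core_subset_D
        (coreTree_prefixClosed.staysIn hU hu T hT), fun T hT => ?_⟩, fun T hT => ?_⟩⟩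
    · by_cases hTw : T = w
      · exact ⟨_, Or.inl hv, closure_eq ▸ hTw ▸ t_mem⟩
      · exact ⟨_, Or.inr ⟨T, hT, hTw, rfl⟩, by rw [mul_inv_cancel]; exact one_mem _⟩
    · have := mul_mem_D _ t_mem _
        (core_subset_D ((coreTree_prefixClosed.staysIn hV hv).mk_mul_mk_mem hT))
      rwa [← mul_assoc, inv_mul_cancel_right, ← mk_append] at this

end Adjoining

section Exits

variable {A : Type} {D : Set (FreeGroup A)} {L : Subgroup (FreeGroup A)} {u v d d' : FreeGroup A}
  {w z z' : List (Ltr A)}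

/-- The walk in the Cayley tree that starts at `d` and is labelled by `z` leaves `D` with its first
step (if there is one). -/
def Exits (D : Set (FreeGroup A)) (d : FreeGroup A) (z : List (Ltr A)) : Prop :=
  ∀ x z', z = x :: z' → d * x.toFreeGroup ∉ D

theorem Exits.of_prefix (h : Exits D d z) (hz : z' <+: z) : Exits D d z' := by
  rintro x T rfl
  obtain ⟨T', rfl⟩ := hz
  exact h x _ rfl

theorem Exits.isReduced_append (hD : PrefixClosed D) {U : List (Ltr A)}
    (hU : FreeGroup.IsReduced U) (hUD : FreeGroup.mk U ∈ D) (hz : FreeGroup.IsReduced z)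
    (h : Exits D (FreeGroup.mk U) z) : FreeGroup.IsReduced (U ++ z) := by
  refine _root_.isReduced_append hU hz fun V x z' hV hz' => ?_
  subst hV
  refine h _ _ hz' ?_
  rw [mk_append, mk_singleton, x.toFreeGroup_inv, mul_inv_cancel_right]
  exact hD V [x] hU hUD

theorem eq_of_append_eq_append_of_exits (hD : PrefixClosed D) {U U' : List (Ltr A)}
    (hU' : FreeGroup.IsReduced U') (hUD' : FreeGroup.mk U' ∈ D)
    (h : Exits D (FreeGroup.mk U) z) {S : List (Ltr A)} (hS : U' = U ++ S) (hz : z = S ++ z') :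
    S = [] := by
  rcases S with _ | ⟨x, S⟩
  · rfl
  · refine absurd ?_ (h x _ hz)
    rw [← mk_singleton, ← mk_append]
    exact hD _ S (by simpa [← hS] using hU') (by simpa [← hS] using hUD')

theorem eq_of_mul_mk_eq_mul_mk_of_exits (hD : PrefixClosed D) (hd : d ∈ D) (hd' : d' ∈ D)
    (hz : FreeGroup.IsReduced z) (hz' : FreeGroup.IsReduced z') (h : Exits D d z)
    (h' : Exits D d' z') (heq : d * FreeGroup.mk z = d' * FreeGroup.mk z') : z = z' := by
  obtain ⟨U, hU, rfl⟩ := exists_isReduced_mk_eq d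
  obtain ⟨U', hU', rfl⟩ := exists_isReduced_mk_eq d'
  have append_eq : U ++ z = U' ++ z' :=
    eq_of_isReduced_of_mk_eq (h.isReduced_append hD hU hd hz) (h'.isReduced_append hD hU' hd' hz')
      (by rw [mk_append, mk_append, heq])
  rcases List.append_eq_append_iff.1 append_eq with ⟨S, hS, hzS⟩ | ⟨S, hS, hzS⟩
  · rw [hzS, eq_of_append_eq_append_of_exits hD hU' hd' h hS hzS, List.nil_append]
  · rw [hzS, eq_of_append_eq_append_of_exits hD hU hd h' hS hzS, List.nil_append]

theorem IsInvariantSubtree.eq_of_exits (hD : IsInvariantSubtree L D) (hd : d ∈ D) (hd' : d' ∈ D)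
    (hz : FreeGroup.IsReduced z) (hz' : FreeGroup.IsReduced z') (h : Exits D d z)
    (h' : Exits D d' z') (hL : d * FreeGroup.mk z * (d' * FreeGroup.mk z')⁻¹ ∈ L) : z = z' := by
  refine eq_of_mul_mk_eq_mul_mk_of_exits hD.prefixClosed hd (hD.mul_mem _ hL d' hd') hz hz' h
    (fun x T hT => ?_) (by group)
  rw [mul_assoc, hD.mul_mem_iff hL]
  exact h' x T hT

end Exits

namespace Autom

variable {A : Type} {M N : Autom A} {p q r : M.Q} {V W : List (Ltr A)} {g h : FreeGroup A}

section Paths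

theorem path_nil_iff : M.Path p [] q ↔ p = q :=
  ⟨fun h => by cases h; rfl, fun h => h ▸ .nil p⟩

theorem path_cons_iff {a : Ltr A} :
    M.Path p (a :: W) q ↔ ∃ r, (p, a, r) ∈ M.E ∧ M.Path r W q :=
  ⟨fun h => by cases h with | cons he hW => exact ⟨_, he, hW⟩, fun ⟨_, he, hW⟩ => .cons he hW⟩

theorem path_append_iff : M.Path p (V ++ W) q ↔ ∃ r, M.Path p V r ∧ M.Path r W q := by
  induction V generalizing p with
  | nil => simp [path_nil_iff]
  | cons a V ih =>
    simp only [List.cons_append, path_cons_iff, ih]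
    grind

theorem path_singleton_iff {a : Ltr A} : M.Path p [a] q ↔ (p, a, q) ∈ M.E := by
  simp [path_cons_iff, path_nil_iff]

theorem Path.invRev (hM : M.Dual) (h : M.Path p W q) : M.Path q (FreeGroup.invRev W) p := by
  induction W generalizing p with
  | nil => exact path_nil_iff.2 (path_nil_iff.1 h).symm
  | cons a W ih =>
    obtain ⟨r, he, hW⟩ := path_cons_iff.1 h
    rw [FreeGroup.invRev_cons]
    exact path_append_iff.2 ⟨r, ih hW, path_singleton_iff.2 ((hM _ _ _).1 he)⟩

theorem Path.map {φ : M.Q → N.Q} (hφ : ∀ p a q, (p, a, q) ∈ M.E → (φ p, a, φ q) ∈ N.E)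
    (h : M.Path p W q) : N.Path (φ p) W (φ q) := by
  induction W generalizing p with
  | nil => exact path_nil_iff.2 (congrArg φ (path_nil_iff.1 h))
  | cons a W ih =>
    obtain ⟨r, he, hW⟩ := path_cons_iff.1 h
    exact path_cons_iff.2 ⟨φ r, hφ _ _ _ he, ih hW⟩

theorem Path.red (hdet : M.Deterministic) (hdual : M.Dual) (h : M.Path p V q)
    (hVW : FreeGroup.Red V W) : M.Path p W q := by
  induction hVW with
  | refl => exact h
  | tail _ hstep ih =>
    cases hstep with | @not U U' a b => ?_
    obtain ⟨r, hU, hr⟩ := path_append_iff.1 ih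
    obtain ⟨s, he, hs⟩ := path_cons_iff.1 hr
    obtain ⟨r', he', hr'⟩ := path_cons_iff.1 hs
    obtain rfl : r = r' := hdet _ _ _ _ ((hdual _ _ _).1 he) he'
    exact path_append_iff.2 ⟨r, hU, hr'⟩

theorem path_of_forall_edge {D : Set (FreeGroup A)} (f : D → M.Q)
    (hf : ∀ (x y : D) (a : Ltr A), (y : FreeGroup A) = x * a.toFreeGroup → (f x, a, f y) ∈ M.E)
    (hW : ∀ T, T <+: W → g * FreeGroup.mk T ∈ D) :
    M.Path (f ⟨g, mul_one g ▸ hW [] List.nil_prefix⟩) W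
      (f ⟨g * FreeGroup.mk W, hW W List.prefix_rfl⟩) := by
  induction W generalizing g with
  | nil => exact path_nil_iff.2 (congrArg f (Subtype.ext (mul_one g).symm))
  | cons a W ih =>
    have mul_mk_cons (T : List (Ltr A)) :
        g * FreeGroup.mk (a :: T) = g * a.toFreeGroup * FreeGroup.mk T := by
      rw [mk_cons, mul_assoc]
    have := ih (g := g * a.toFreeGroup) fun T hT =>
      mul_mk_cons T ▸ hW (a :: T) (List.cons_prefix_cons.2 ⟨rfl, hT⟩)
    simp only [← mul_mk_cons] at this
    exact path_cons_iff.2 ⟨_, hf _ _ a rfl, this⟩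

end Paths

section Connects

/-- Some path from `p` to `q` has a label representing the element `g` of the free group. -/
def Connects (M : Autom A) (p : M.Q) (g : FreeGroup A) (q : M.Q) : Prop :=
  ∃ W, M.Path p W q ∧ FreeGroup.mk W = g

theorem Path.connects (h : M.Path p W q) : M.Connects p (FreeGroup.mk W) q := ⟨W, h, rfl⟩

theorem connects_of_edge {a : Ltr A} (h : (p, a, q) ∈ M.E) : M.Connects p a.toFreeGroup q :=
  (path_singleton_iff.2 h).connects

theorem Connects.one (p : M.Q) : M.Connects p 1 p := ⟨[], .nil p, rfl⟩

theorem Connects.mul (hg : M.Connects p g q) (hh : M.Connects q h r) : M.Connects p (g * h) r := by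
  obtain ⟨V, hV, rfl⟩ := hg
  obtain ⟨W, hW, rfl⟩ := hh
  exact ⟨V ++ W, path_append_iff.2 ⟨q, hV, hW⟩, mk_append V W⟩

theorem Connects.inv (hM : M.Dual) (hg : M.Connects p g q) : M.Connects q g⁻¹ p := by
  obtain ⟨W, hW, rfl⟩ := hg
  exact ⟨_, hW.invRev hM, mk_invRev W⟩

theorem Connects.map {φ : M.Q → N.Q} (hφ : ∀ p a q, (p, a, q) ∈ M.E → (φ p, a, φ q) ∈ N.E)
    (h : M.Connects p g q) : N.Connects (φ p) g (φ q) :=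
  let ⟨W, hW, hg⟩ := h
  ⟨W, hW.map hφ, hg⟩

theorem Connects.path (hdet : M.Deterministic) (hdual : M.Dual)
    (h : M.Connects p (FreeGroup.mk W) q) (hW : FreeGroup.IsReduced W) : M.Path p W q :=
  let ⟨_, hV, hVW⟩ := h
  hV.red hdet hdual (red_of_isReduced_of_mk_eq hW hVW)

theorem Connects.eq_of_one (hdet : M.Deterministic) (hdual : M.Dual) (h : M.Connects p 1 q) :
    p = q :=
  path_nil_iff.1 (Connects.path (W := []) hdet hdual h .nil)

theorem Connects.unique (hdet : M.Deterministic) (hdual : M.Dual) (hq : M.Connects p g q)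
    (hr : M.Connects p g r) : q = r := by
  refine Connects.eq_of_one hdet hdual ?_
  simpa using (hq.inv hdual).mul hr

/-- The subgroup of the free group represented by the closed paths at the initial state. -/
def loops (M : Autom A) (hM : M.Dual) : Subgroup (FreeGroup A) where
  carrier := {g | M.Connects M.q0 g M.q0}
  one_mem' := .one _
  mul_mem' := .mul
  inv_mem' := .inv hM

theorem mem_loops_iff (hM : M.Dual) : g ∈ M.loops hM ↔ M.Connects M.q0 g M.q0 := Iff.rfl

end Connects

section AddEdge

variable {a : Ltr A}

/-- The automaton `M` with an additional pair of mutually inverse transitions. -/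
abbrev addEdge (M : Autom A) (p : M.Q) (a : Ltr A) (q : M.Q) : Autom A where
  Q := M.Q
  q0 := M.q0
  E := M.E ∪ {(p, a, q), (q, a.inv, p)}

theorem addEdge_dual (hM : M.Dual) : (M.addEdge p a q).Dual := fun r b s => by
  have := hM r b s
  grind [Ltr.inv_inv]

theorem addEdge_deterministic (hM : M.Deterministic) (hp : ∀ r, (p, a, r) ∉ M.E)
    (hq : ∀ r, (q, a.inv, r) ∉ M.E) : (M.addEdge p a q).Deterministic := fun r b s s' => by
  have := hM r b s s'
  grind [Ltr.inv_ne_self]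

end AddEdge

section QuotientAutom

variable {L : Subgroup (FreeGroup A)} {D : Set (FreeGroup A)}

/-- The quotient by `L` of the full subgraph of the Cayley tree of the free group spanned by
`D ∋ 1`. For `D = coreTree L` this is the Stallings automaton of `L`. -/
def quotientAutom (L : Subgroup (FreeGroup A)) (D : Set (FreeGroup A)) (hD : 1 ∈ D) : Autom A where
  Q := Quotient ((QuotientGroup.rightRel L).comap ((↑) : D → FreeGroup A))
  q0 := Quotient.mk _ ⟨1, hD⟩
  E := {e | ∃ x y : D, Quotient.mk _ x = e.1 ∧ Quotient.mk _ y = e.2.2 ∧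
    (y : FreeGroup A) = x * e.2.1.toFreeGroup}

variable {hD : 1 ∈ D}

/-- The state of `quotientAutom L D hD` given by an element of `D`. -/
def state (L : Subgroup (FreeGroup A)) (hD : 1 ∈ D) (x : D) : (quotientAutom L D hD).Q :=
  Quotient.mk _ x

theorem state_surjective : Surjective (state L hD) := Quotient.mk_surjective

theorem state_eq_iff {x y : D} :
    state L hD x = state L hD y ↔ (x : FreeGroup A) * (y : FreeGroup A)⁻¹ ∈ L := by
  rw [eq_comm]
  exact Quotient.eq.trans QuotientGroup.rightRel_apply

theorem mem_quotientAutom_iff {a : Ltr A} {p q : (quotientAutom L D hD).Q} :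
    (p, a, q) ∈ (quotientAutom L D hD).E ↔ ∃ x y : D, state L hD x = p ∧ state L hD y = q ∧
      (y : FreeGroup A) = x * a.toFreeGroup := Iff.rfl

theorem quotientAutom_dual : (quotientAutom L D hD).Dual := by
  have inv_edge {p a q} (h : (p, a, q) ∈ (quotientAutom L D hD).E) :
      (q, a.inv, p) ∈ (quotientAutom L D hD).E := by
    obtain ⟨x, y, hx, hy, hxy⟩ := mem_quotientAutom_iff.1 h
    exact ⟨y, x, hy, hx, by rw [hxy, a.toFreeGroup_inv, mul_inv_cancel_right]⟩
  exact fun p a q => ⟨inv_edge, fun h => a.inv_inv ▸ inv_edge h⟩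

theorem quotientAutom_deterministic : (quotientAutom L D hD).Deterministic := by
  rintro p a q q' ⟨x, y, hx, hy, hxy⟩ ⟨x', y', hx', hy', hxy'⟩
  change state L hD x = p at hx
  change state L hD x' = p at hx'
  change state L hD y = q at hy
  change state L hD y' = q' at hy'
  have hxx' := state_eq_iff.1 (hx.trans hx'.symm)
  rw [← hy, ← hy', state_eq_iff, hxy, hxy']
  simpa [mul_assoc] using hxx'

theorem path_state {g : FreeGroup A} {W : List (Ltr A)}
    (hW : ∀ T, T <+: W → g * FreeGroup.mk T ∈ D) :
    (quotientAutom L D hD).Path (state L hD ⟨g, mul_one g ▸ hW [] List.nil_prefix⟩) W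
      (state L hD ⟨g * FreeGroup.mk W, hW W List.prefix_rfl⟩) :=
  path_of_forall_edge (state L hD) (fun x y _ h => ⟨x, y, rfl, rfl, h⟩) hW

end QuotientAutom

end Autom

section AttachingArcs

variable {A : Type} {D : Set (FreeGroup A)} {L : Subgroup (FreeGroup A)} {u v d x : FreeGroup A}
  {w z z' c c' V : List (Ltr A)} {b : Ltr A}

/-- The vertices `d * V` of the Cayley tree, where `d ∈ D` and the walk from `d` labelled by the
reduced word `V` exits `D`, for all words `V` other than `c` and `c'`. -/
def exitsAvoiding (D : Set (FreeGroup A)) (c c' : List (Ltr A)) : Set (FreeGroup A) :=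
  {x | ∃ d ∈ D, ∃ V, FreeGroup.IsReduced V ∧ Exits D d V ∧ V ≠ c ∧ V ≠ c' ∧
    d * FreeGroup.mk V = x}

theorem subset_exitsAvoiding (hc : c ≠ []) (hc' : c' ≠ []) : D ⊆ exitsAvoiding D c c' :=
  fun d hd => ⟨d, hd, [], .nil, nofun, hc.symm, hc'.symm, mul_one d⟩

theorem not_mem_exitsAvoiding (hD : IsInvariantSubtree L D) (hd : d ∈ D)
    (hV : FreeGroup.IsReduced V) (hex : Exits D d V) (hVc : V = c ∨ V = c')
    (hL : x * (d * FreeGroup.mk V)⁻¹ ∈ L) : x ∉ exitsAvoiding D c c' := by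
  rintro ⟨d', hd', V', hV', hex', hVc', hVc'', rfl⟩
  obtain rfl := hD.eq_of_exits hd' hd hV' hV hex' hex hL
  exact hVc.elim hVc' hVc''

theorem not_edge_of_exits (hD : IsInvariantSubtree L D) (hd : d ∈ D)
    (hz : FreeGroup.IsReduced (z ++ [b])) (hex : Exits D d (z ++ [b]))
    (hzc : z ++ [b] = c ∨ z ++ [b] = c') {h1 : 1 ∈ exitsAvoiding D c c'}
    (hx : d * FreeGroup.mk z ∈ exitsAvoiding D c c') (r : (Autom.quotientAutom L _ h1).Q) :
    (Autom.state L h1 ⟨d * FreeGroup.mk z, hx⟩, b, r) ∉ (Autom.quotientAutom L _ h1).E := by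
  intro he
  obtain ⟨x, y, hxz, -, hxy⟩ := Autom.mem_quotientAutom_iff.1 he
  have hxL := Autom.state_eq_iff.1 hxz
  refine not_mem_exitsAvoiding hD hd hz hex hzc ?_ y.2
  rw [hxy, mk_append, mk_singleton]
  simpa [mul_assoc] using hxL

theorem mul_mk_mem_exitsAvoiding (hd : d ∈ D) (hzb : FreeGroup.IsReduced (z ++ [b]))
    (hex : Exits D d (z ++ [b])) (hz : ∀ T, T <+: z → T ≠ c ∧ T ≠ c') :
    ∀ T, T <+: z → d * FreeGroup.mk T ∈ exitsAvoiding D c c' := fun T hT =>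
  have hTb : T <+: z ++ [b] := hT.trans (List.prefix_append z [b])
  ⟨d, hd, T, hzb.infix hTb.isInfix, hex.of_prefix hTb, (hz T hT).1, (hz T hT).2, rfl⟩

theorem connects_state (hD : PrefixClosed D) {E : Set (FreeGroup A)} (hDE : D ⊆ E) (h1 : 1 ∈ E)
    (hx : x ∈ D) : (Autom.quotientAutom L E h1).Connects (Autom.quotientAutom L E h1).q0 x
      (Autom.state L h1 ⟨x, hDE hx⟩) := by
  obtain ⟨W, hW, rfl⟩ := exists_isReduced_mk_eq x
  have := (Autom.path_state (L := L) (hD := h1) (g := 1) (W := W) fun T hT =>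
    (one_mul (FreeGroup.mk T)).symm ▸ hDE (hD.staysIn hW hx T hT)).connects
  simp only [one_mul] at this
  exact this

theorem quotientEmbeds_of_exits (hD : IsInvariantSubtree L D) (hu : u ∈ D) (hv : v ∈ D)
    (hz : FreeGroup.IsReduced (z ++ [b])) (hz' : FreeGroup.IsReduced (z' ++ [b.inv]))
    (hexu : Exits D u (z ++ [b])) (hexv : Exits D v (z' ++ [b.inv]))
    (hne : ∀ T, T <+: z → T ≠ z ++ [b] ∧ T ≠ z' ++ [b.inv])
    (hne' : ∀ T, T <+: z' → T ≠ z ++ [b] ∧ T ≠ z' ++ [b.inv]) :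
    QuotientEmbeds D L (L ⊔ Subgroup.zpowers
      (u * FreeGroup.mk z * b.toFreeGroup * (v * FreeGroup.mk z')⁻¹)) := by
  set N := exitsAvoiding D (z ++ [b]) (z' ++ [b.inv])
  have hDN : D ⊆ N := subset_exitsAvoiding (by simp) (by simp)
  have huz := mul_mk_mem_exitsAvoiding hu hz hexu hne
  have hvz := mul_mk_mem_exitsAvoiding hv hz' hexv hne'
  set M := Autom.quotientAutom L N (hDN hD.one_mem)
  set p : M.Q := Autom.state L _ ⟨_, huz z List.prefix_rfl⟩
  set q : M.Q := Autom.state L _ ⟨_, hvz z' List.prefix_rfl⟩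
  let R := M.addEdge p b q
  have hdual : R.Dual := Autom.addEdge_dual Autom.quotientAutom_dual
  have hdet : R.Deterministic := Autom.addEdge_deterministic Autom.quotientAutom_deterministic
    (not_edge_of_exits hD hu hz hexu (Or.inl rfl) _)
    (not_edge_of_exits hD hv hz' hexv (Or.inr rfl) _)
  have connects_of_M {r s : M.Q} {g} (h : M.Connects r g s) : R.Connects r g s :=
    Autom.Connects.map (M := M) (N := R) (φ := fun r => r) (fun _ _ _ => Or.inl) h
  have connects_D (x) (hx : x ∈ D) : R.Connects R.q0 x (Autom.state L _ ⟨x, hDN hx⟩) :=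
    connects_of_M (connects_state hD.prefixClosed hDN _ hx)
  have connects_p : R.Connects R.q0 (u * FreeGroup.mk z) p :=
    (connects_D u hu).mul (connects_of_M (Autom.path_state huz).connects)
  have connects_q : R.Connects R.q0 (v * FreeGroup.mk z') q :=
    (connects_D v hv).mul (connects_of_M (Autom.path_state hvz).connects)
  have connects_edge : R.Connects p b.toFreeGroup q := Autom.connects_of_edge (by simp [R])
  have le_loops : L ⊔ Subgroup.zpowers
      (u * FreeGroup.mk z * b.toFreeGroup * (v * FreeGroup.mk z')⁻¹) ≤ R.loops hdual := by
    refine sup_le (fun l hl => ?_) (Subgroup.zpowers_le.2 ?_)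
    · have state_l : Autom.state L _ ⟨l, hDN (hD.mem_of_mem hl)⟩ = M.q0 :=
        Autom.state_eq_iff.2 (by simpa using hl)
      have connects_l := connects_D l (hD.mem_of_mem hl)
      rwa [state_l] at connects_l
    · exact (connects_p.mul connects_edge).mul (connects_q.inv hdual)
  intro x hx y hy hxy
  have connects_y := (le_loops hxy).mul (connects_D y hy)
  rw [inv_mul_cancel_right] at connects_y
  have state_eq := (connects_D x hx).unique hdet hdual connects_y
  exact Autom.state_eq_iff.1 state_eq

theorem exists_eq_append_cons_invRev (hw : w ≠ []) : ∃ z b z', w = z ++ b :: FreeGroup.invRev z' ∧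
    z'.length ≤ z.length ∧ z.length ≤ z'.length + 1 := by
  have hlt : w.length / 2 < w.length := Nat.div_lt_self (List.length_pos_of_ne_nil hw) one_lt_two
  refine ⟨w.take (w.length / 2), w[w.length / 2],
    FreeGroup.invRev (w.drop (w.length / 2 + 1)), ?_, ?_, ?_⟩
  · rw [FreeGroup.invRev_invRev, ← List.drop_eq_getElem_cons, List.take_append_drop]
  all_goals simp only [FreeGroup.invRev_length, List.length_take, List.length_drop]; omega

/- The automaton of `D` is completed by both halves of the arc, and the halves are joined by the
middle letter of `w`. Cutting in the middle ensures that the result is deterministic even when the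
two ends of the arc overlap. -/
theorem quotientEmbeds_sup_zpowers (hD : IsInvariantSubtree L D) (hu : u ∈ D) (hv : v ∈ D)
    (hw : FreeGroup.IsReduced w) (hne : w ≠ []) (hexu : Exits D u w)
    (hexv : Exits D v (FreeGroup.invRev w)) :
    QuotientEmbeds D L (L ⊔ Subgroup.zpowers (u * FreeGroup.mk w * v⁻¹)) := by
  obtain ⟨z, b, z', rfl, hle, hle'⟩ := exists_eq_append_cons_invRev hne
  have hz : z ++ [b] <+: z ++ b :: FreeGroup.invRev z' := ⟨FreeGroup.invRev z', by simp⟩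
  have hz' : z' ++ [Ltr.inv b] <+: FreeGroup.invRev (z ++ b :: FreeGroup.invRev z') :=
    ⟨FreeGroup.invRev z, by
      rw [FreeGroup.invRev_append, FreeGroup.invRev_cons, FreeGroup.invRev_invRev]
      simp [FreeGroup.invRev, Ltr.inv]⟩
  have z_ne : z ≠ z' ++ [Ltr.inv b] := fun h => by
    rw [h, List.append_assoc] at hw
    refine (isReduced_cons_cons_iff.1 (isReduced_of_append_right hw)).1 (Ltr.inv_inv b).symm
  have := quotientEmbeds_of_exits hD hu hv (hw.infix hz.isInfix)
    ((isReduced_invRev hw).infix hz'.isInfix) (hexu.of_prefix hz) (hexv.of_prefix hz')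
    (fun T hT => ⟨fun h => ?_, fun h => ?_⟩) (fun T hT => ⟨fun h => ?_, fun h => ?_⟩)
  · rw [mk_append, mk_cons, mk_invRev]
    simpa [mul_assoc] using this
  · simpa [h] using hT.length_le
  · refine z_ne ?_
    rw [← h]
    exact (hT.eq_of_length_le (by simp [h, hle'])).symm
  · have := hT.length_le
    simp only [h, List.length_append, List.length_singleton] at this
    omega
  · simpa [h] using hT.length_le

end AttachingArcs

section ShortestArcs

variable {A : Type} {k : ℕ} {L K M : Subgroup (FreeGroup A)} {u v x y : FreeGroup A}
  {w : List (Ltr A)}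

theorem sup_zpowers_mul_mul {G : Type*} [Group G] {M : Subgroup G} {a b : G} (ha : a ∈ M)
    (hb : b ∈ M) (g : G) : M ⊔ Subgroup.zpowers (a * g * b) = M ⊔ Subgroup.zpowers g := by
  have mem_left {g : G} {c : G} (hc : c ∈ M) : c ∈ M ⊔ Subgroup.zpowers g :=
    Subgroup.mem_sup_left hc
  have mem_right (g : G) : g ∈ M ⊔ Subgroup.zpowers g :=
    Subgroup.mem_sup_right (Subgroup.mem_zpowers g)
  refine le_antisymm (sup_le le_sup_left ?_) (sup_le le_sup_left ?_) <;> rw [Subgroup.zpowers_le]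
  · exact mul_mem (mul_mem (mem_left ha) (mem_right g)) (mem_left hb)
  · have := mul_mem (mul_mem (inv_mem (mem_left ha)) (mem_right (a * g * b)))
      (inv_mem (mem_left hb))
    simpa [mul_assoc] using this

theorem sup_zpowers_mul_inv_comm {G : Type*} [Group G] (M : Subgroup G) (x y : G) :
    M ⊔ Subgroup.zpowers (x * y⁻¹) = M ⊔ Subgroup.zpowers (y * x⁻¹) := by
  rw [← Subgroup.zpowers_inv, mul_inv_rev, inv_inv]

/-- Attaching to the Stallings automaton of `L` an arc labelled by `w` gives the automaton of a
subgroup over which `K` is generated by `k` elements. -/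
def IsArc (k : ℕ) (L K : Subgroup (FreeGroup A)) (w : List (Ltr A)) : Prop :=
  ∃ u ∈ coreTree L, ∃ v ∈ coreTree L,
    GeneratedOver k (L ⊔ Subgroup.zpowers (u * FreeGroup.mk w * v⁻¹)) K

theorem exists_isArc (h : GeneratedOver (k + 1) L K) : ∃ w, IsArc k L K w := by
  obtain ⟨t, ht⟩ := generatedOver_succ_iff.1 h
  obtain ⟨w, -, rfl⟩ := exists_isReduced_mk_eq t
  have hone : 1 ∈ coreTree L := isInvariantSubtree_coreTree.one_mem
  exact ⟨w, 1, hone, 1, hone, by simpa using ht⟩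

theorem exists_minimal_isArc (h : GeneratedOver (k + 1) L K) :
    ∃ w, IsArc k L K w ∧ ∀ w', IsArc k L K w' → w.length ≤ w'.length := by
  obtain ⟨w, hw, hmin⟩ := (measure List.length).wf.has_min {w | IsArc k L K w} (exists_isArc h)
  exact ⟨w, hw, fun w' hw' => not_lt.1 (hmin w' hw')⟩

theorem exits_of_minimal_arc (hv : v ∈ coreTree L)
    (hgen : GeneratedOver k (L ⊔ Subgroup.zpowers (u * FreeGroup.mk w * v⁻¹)) K)
    (hmin : ∀ w', IsArc k L K w' → w.length ≤ w'.length) : Exits (coreTree L) u w := by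
  rintro x z rfl hx
  refine (hmin z ⟨_, hx, v, hv, ?_⟩).not_gt (by simp)
  rwa [mk_cons, ← mul_assoc] at hgen

theorem isReduced_of_minimal_arc (hu : u ∈ coreTree L) (hv : v ∈ coreTree L)
    (hgen : GeneratedOver k (L ⊔ Subgroup.zpowers (u * FreeGroup.mk w * v⁻¹)) K)
    (hmin : ∀ w', IsArc k L K w' → w.length ≤ w'.length) : FreeGroup.IsReduced w := by
  obtain ⟨w', hw', hww'⟩ := exists_isReduced_mk_eq (FreeGroup.mk w)
  have hsub : w'.Sublist w := (red_of_isReduced_of_mk_eq hw' hww'.symm).sublist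
  rwa [← hsub.eq_of_length_le (hmin w' ⟨u, hu, v, hv, hww' ▸ hgen⟩)]

theorem quotientEmbeds_of_minimal_arc (hu : u ∈ coreTree L) (hv : v ∈ coreTree L)
    (hgen : GeneratedOver k (L ⊔ Subgroup.zpowers (u * FreeGroup.mk w * v⁻¹)) K)
    (hmin : ∀ w', IsArc k L K w' → w.length ≤ w'.length) (hne : w ≠ []) :
    QuotientEmbeds (coreTree L) L (L ⊔ Subgroup.zpowers (u * FreeGroup.mk w * v⁻¹)) := by
  refine quotientEmbeds_sup_zpowers isInvariantSubtree_coreTree hu hv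
    (isReduced_of_minimal_arc hu hv hgen hmin) hne (exits_of_minimal_arc hv hgen hmin)
    (exits_of_minimal_arc hu ?_ (by simpa using hmin))
  rwa [mk_invRev, ← Subgroup.zpowers_inv, mul_inv_rev, mul_inv_rev, inv_inv, inv_inv, ← mul_assoc]

theorem isArc_of_sup (hx : x ∈ coreTree L) (hy : y ∈ coreTree L) {t : FreeGroup A}
    (h : GeneratedOver k
      (L ⊔ Subgroup.zpowers t ⊔ Subgroup.zpowers (x * FreeGroup.mk w * y⁻¹)) K) :
    IsArc (k + 1) L K w :=
  ⟨x, hx, y, hy, generatedOver_succ_iff.2 ⟨t, by rwa [sup_right_comm]⟩⟩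

theorem isArc_of_identify_on_arc {T m r : List (Ltr A)} (hu : u ∈ coreTree L)
    (hv : v ∈ coreTree L)
    (h : GeneratedOver k (L ⊔ Subgroup.zpowers (u * FreeGroup.mk (T ++ m ++ r) * v⁻¹) ⊔
      Subgroup.zpowers (u * FreeGroup.mk T * (u * FreeGroup.mk (T ++ m))⁻¹)) K) :
    IsArc (k + 1) L K (T ++ r) := by
  refine isArc_of_sup hu hv (t := u * FreeGroup.mk (T ++ m ++ r) * v⁻¹) ?_
  rw [← sup_zpowers_mul_mul (one_mem _)
    (Subgroup.mem_sup_right (Subgroup.mem_zpowers (u * FreeGroup.mk (T ++ m ++ r) * v⁻¹)))] at h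
  convert h using 3
  simp only [mk_append]
  group

theorem exists_isArc_length_lt (hu : u ∈ coreTree L) (hv : v ∈ coreTree L) (hne : w ≠ [])
    (hx : x ∈ coreTree L ∨ ∃ T, T <+: w ∧ T ≠ w ∧ x = u * FreeGroup.mk T)
    (hy : y ∈ coreTree L ∨ ∃ T, T <+: w ∧ T ≠ w ∧ y = u * FreeGroup.mk T) (hxy : x ≠ y)
    (h : GeneratedOver k (L ⊔ Subgroup.zpowers (u * FreeGroup.mk w * v⁻¹) ⊔
      Subgroup.zpowers (x * y⁻¹)) K) :
    ∃ w', IsArc (k + 1) L K w' ∧ w'.length < w.length := by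
  have length_lt {T : List (Ltr A)} (hT : T <+: w) (hTw : T ≠ w) : T.length < w.length :=
    lt_of_not_ge fun hle => hTw (hT.eq_of_length_le hle)
  rcases hx with hx | ⟨T, hT, hTw, rfl⟩ <;> rcases hy with hy | ⟨T', hT', hTw', rfl⟩
  · exact ⟨[], isArc_of_sup hx hy (by simpa [mk_nil] using h), List.length_pos_of_ne_nil hne⟩
  · rw [sup_zpowers_mul_inv_comm] at h
    exact ⟨T', isArc_of_sup hu hx h, length_lt hT' hTw'⟩
  · exact ⟨T, isArc_of_sup hu hy h, length_lt hT hTw⟩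
  wlog hTT' : T <+: T' generalizing T T'
  · rw [sup_zpowers_mul_inv_comm] at h
    exact this T' hT' hTw' T hT hTw hxy.symm h
      ((List.prefix_or_prefix_of_prefix hT hT').resolve_left hTT')
  obtain ⟨m, rfl⟩ := hTT'
  obtain ⟨r, rfl⟩ := hT'
  refine ⟨T ++ r, isArc_of_identify_on_arc hu hv h, ?_⟩
  have : m ≠ [] := by rintro rfl; simp at hxy
  have := List.length_pos_of_ne_nil this
  grind

/- A shortest arc over which `K` is still generated by `k` elements embeds the Stallings automaton
of `L` into a new one. An identification in the new automaton would turn the arc into a shorter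
one. -/
theorem exists_identification (hgen : GeneratedOver k L K)
    (hK : ¬ QuotientEmbeds (coreTree L) L K) :
    ∃ k', k = k' + 1 ∧ ∃ x ∈ coreTree L, ∃ y ∈ coreTree L, x * y⁻¹ ∉ L ∧
      GeneratedOver k' (L ⊔ Subgroup.zpowers (x * y⁻¹)) K := by
  induction k generalizing L with
  | zero => exact absurd (fun _ _ _ _ h => generatedOver_zero_iff.1 hgen ▸ h) hK
  | succ k ih =>
    obtain ⟨w, ⟨u, hu, v, hv, hw⟩, hmin⟩ := exists_minimal_isArc hgen
    by_cases hne : w = []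
    · rw [hne, mk_nil, mul_one] at hw
      by_cases huv : u * v⁻¹ ∈ L
      · rw [sup_eq_left.2 (Subgroup.zpowers_le.2 huv)] at hw
        obtain ⟨k', rfl, x, hx, y, hy, hxy, hgen'⟩ := ih hw hK
        exact ⟨_, rfl, x, hx, y, hy, hxy, generatedOver_succ_iff.2 ⟨1, by simpa using hgen'⟩⟩
      · exact ⟨k, rfl, u, hu, v, hv, huv, hw⟩
    · have hL := quotientEmbeds_of_minimal_arc hu hv hw hmin hne
      obtain ⟨k', rfl, x, hx, y, hy, hxy, hgen'⟩ := ih hw fun h => hK (hL.trans le_sup_left h)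
      obtain ⟨x', hx', hxx'⟩ := exists_of_mem_coreTree_sup_zpowers hu hv hx
      obtain ⟨y', hy', hyy'⟩ := exists_of_mem_coreTree_sup_zpowers hu hv hy
      have hxy_eq : x * y⁻¹ = x * x'⁻¹ * (x' * y'⁻¹) * (y * y'⁻¹)⁻¹ := by group
      rw [hxy_eq, sup_zpowers_mul_mul hxx' (inv_mem hyy')] at hgen'
      have hne' : x' ≠ y' := by
        rintro rfl
        exact hxy (by simpa [mul_assoc] using mul_mem hxx' (inv_mem hyy'))
      obtain ⟨w', hw', hlt⟩ := exists_isArc_length_lt hu hv hne hx' hy' hne' hgen'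
      exact absurd (hmin w' hw') hlt.not_ge

end ShortestArcs

section Cocycles

variable {F X G : Type*} [Group F] [MulAction F X] [Group G] {c : F → X → G}

/-- A cocycle of the action of `F` on `X` with values in `G`, that is, a crossed homomorphism from
`F` to `X → G`. -/
def IsCocycle (c : F → X → G) : Prop :=
  ∀ g h x, c (g * h) x = c g x * c h (g⁻¹ • x)

namespace IsCocycle

theorem map_one (hc : IsCocycle c) (x : X) : c 1 x = 1 := by
  simpa using hc 1 1 x

theorem map_inv (hc : IsCocycle c) (g : F) (x : X) : c g⁻¹ (g⁻¹ • x) = (c g x)⁻¹ := by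
  rw [← mul_eq_one_iff_eq_inv', ← hc, mul_inv_cancel, hc.map_one]

/-- The homomorphism which a cocycle induces on the stabilizer of a point. -/
def stabilizerHom (hc : IsCocycle c) (x : X) : MulAction.stabilizer F x →* G where
  toFun g := c g x
  map_one' := hc.map_one x
  map_mul' g h := by
    rw [Subgroup.coe_mul, hc, MulAction.mem_stabilizer_iff.1 (inv_mem g.2)]

end IsCocycle

theorem exists_isCocycle {A : Type*} [MulAction (FreeGroup A) X] (γ : X → A → G) :
    ∃ c : FreeGroup A → X → G, IsCocycle c ∧ ∀ a x, c (FreeGroup.of a) x = γ x a := by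
  let σ : FreeGroup A →* (X → G) ⋊[mulAutArrow] FreeGroup A :=
    FreeGroup.lift fun a => ⟨fun x => γ x a, FreeGroup.of a⟩
  have right_σ (g) : (σ g).right = g :=
    DFunLike.congr_fun (FreeGroup.ext_hom (SemidirectProduct.rightHom.comp σ) (.id _) fun a => by
      simp [σ]) g
  refine ⟨fun g => (σ g).left, fun g h x => ?_, fun a x => ?_⟩
  · simp only [map_mul, SemidirectProduct.mul_left, right_σ]
    rfl
  · simp [σ]

end Cocycles

section SchreierTransversals

variable {A : Type} {D T T₀ : Set (FreeGroup A)} {L K : Subgroup (FreeGroup A)}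

theorem prefixClosed_insert (hT : PrefixClosed T) {τ : FreeGroup A} (hτ : τ ∈ T) (b : Ltr A) :
    PrefixClosed (insert (τ * b.toFreeGroup) T) := by
  have staysIn {U : List (Ltr A)} (hU : FreeGroup.IsReduced U) (hUT : FreeGroup.mk U ∈ T) :
      StaysIn (insert (τ * b.toFreeGroup) T) U := fun V hV =>
    Set.mem_insert_of_mem _ (hT.staysIn hU hUT V hV)
  refine prefixClosed_of_exists_staysIn fun g hg => ?_
  rcases hg with rfl | hg
  · obtain ⟨U, hU, rfl⟩ := exists_isReduced_mk_eq τ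
    refine ⟨U ++ [b], by rw [mk_append, mk_singleton], fun V hV => ?_⟩
    rcases List.prefix_concat_iff.1 hV with rfl | hV
    · rw [mk_append, mk_singleton]
      exact Set.mem_insert _ _
    · exact staysIn hU hτ V hV
  · obtain ⟨U, hU, rfl⟩ := exists_isReduced_mk_eq g
    exact ⟨U, rfl, staysIn hU hg⟩

theorem exists_maximal_partial_transversal (hT₀D : T₀ ⊆ D) (hT₀ : PrefixClosed T₀)
    (hT₀K : QuotientEmbeds T₀ ⊥ K) : ∃ T, T₀ ⊆ T ∧
      Maximal (fun T => T ⊆ D ∧ PrefixClosed T ∧ QuotientEmbeds T ⊥ K) T := by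
  refine zorn_subset_nonempty {T | T ⊆ D ∧ PrefixClosed T ∧ QuotientEmbeds T ⊥ K}
    (fun 𝒞 h𝒞 hchain _ => ⟨⋃₀ 𝒞, ⟨Set.sUnion_subset fun T hT => (h𝒞 hT).1, ?_, ?_⟩,
      fun T hT => Set.subset_sUnion_of_mem hT⟩) T₀ ⟨hT₀D, hT₀, hT₀K⟩
  · rintro V W hVW ⟨T, hT, hVT⟩
    exact ⟨T, hT, (h𝒞 hT).2.1 V W hVW hVT⟩
  · rintro x ⟨T, hT, hxT⟩ y ⟨T', hT', hyT'⟩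
    rcases hchain.total hT hT' with h | h
    · exact (h𝒞 hT').2.2 x (h hxT) y hyT'
    · exact (h𝒞 hT).2.2 x hxT y (h hyT')

theorem QuotientEmbeds.insert (hT : QuotientEmbeds T ⊥ K) {g : FreeGroup A}
    (hg : ∀ τ ∈ T, g * τ⁻¹ ∉ K) : QuotientEmbeds (insert g T) ⊥ K := by
  rintro x (rfl | hx) y (rfl | hy) hxy
  · simp
  · exact absurd hxy (hg y hy)
  · exact absurd (by simpa using inv_mem hxy) (hg x hx)
  · exact hT x hx y hy hxy

theorem exists_partial_transversal (hD : IsInvariantSubtree L D) (hDK : QuotientEmbeds D L K)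
    (hone : 1 ∈ T₀) (hT₀D : T₀ ⊆ D) (hT₀ : PrefixClosed T₀) (hT₀K : QuotientEmbeds T₀ ⊥ K) :
    ∃ T, T₀ ⊆ T ∧ T ⊆ D ∧ PrefixClosed T ∧ QuotientEmbeds T ⊥ K ∧
      ∀ g ∈ D, ∃ τ ∈ T, g * τ⁻¹ ∈ K := by
  obtain ⟨T, hT₀T, ⟨hTD, hT, hTK⟩, hmax⟩ := exists_maximal_partial_transversal hT₀D hT₀ hT₀K
  refine ⟨T, hT₀T, hTD, hT, hTK, fun g hg => ?_⟩
  obtain ⟨W, hW, rfl⟩ := exists_isReduced_mk_eq g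
  induction W using List.reverseRecOn with
  | nil => exact ⟨1, hT₀T hone, by simp [mk_nil]⟩
  | append_singleton V b ih =>
    obtain ⟨τ, hτ, hVτ⟩ := ih (isReduced_of_append_left hW) (hD.prefixClosed V [b] hW hg)
    by_contra! hV
    have class_eq : FreeGroup.mk (V ++ [b]) * (τ * Ltr.toFreeGroup b)⁻¹ = FreeGroup.mk V * τ⁻¹ := by
      rw [mk_append, mk_singleton]
      group
    have hτb : τ * Ltr.toFreeGroup b ∈ D := (hD.mem_iff_of_mul_inv_mem (class_eq ▸
      hDK _ (hD.prefixClosed V [b] hW hg) τ (hTD hτ) hVτ)).1 hg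
    have avoids (σ) (hσ : σ ∈ T) : τ * Ltr.toFreeGroup b * σ⁻¹ ∉ K := fun h => hV σ hσ (by
      have := mul_mem (class_eq.symm ▸ hVτ) h
      rwa [← mul_assoc, inv_mul_cancel_right] at this)
    have hmem := hmax ⟨Set.insert_subset hτb hTD, prefixClosed_insert hT hτ b, hTK.insert avoids⟩
      (Set.subset_insert _ _) (Set.mem_insert _ _)
    exact avoids _ hmem (by simp)

/-- A Schreier transversal of `K`. The left coset `g⁻¹K` stands for the right coset `Kg`, so that
multiplication of right cosets by group elements from the right becomes a left action. -/
structure SchreierTransversal (K : Subgroup (FreeGroup A)) where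
  rep : FreeGroup A ⧸ K → FreeGroup A
  mk_rep_inv : ∀ x, (((rep x)⁻¹ : FreeGroup A) : FreeGroup A ⧸ K) = x
  prefixClosed : PrefixClosed (Set.range rep)

theorem mk_inv_eq_mk_inv_iff {G : Type*} [Group G] {K : Subgroup G} {x y : G} :
    ((x⁻¹ : G) : G ⧸ K) = (y⁻¹ : G) ↔ x * y⁻¹ ∈ K := by
  rw [QuotientGroup.eq, inv_inv]

theorem exists_schreierTransversal (hD : IsInvariantSubtree L D) (hDK : QuotientEmbeds D L K) :
    ∃ T : SchreierTransversal K, ∀ g ∈ D, T.rep (g⁻¹ : FreeGroup A) ∈ D := by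
  have trivial_prefixClosed : PrefixClosed ({1} : Set (FreeGroup A)) :=
    prefixClosed_of_exists_staysIn fun g hg => ⟨[], hg.symm, fun V hV => by
      rw [List.prefix_nil.1 hV]; rfl⟩
  have univ_invariant : IsInvariantSubtree K Set.univ :=
    ⟨trivial, fun _ _ _ _ => trivial, fun _ _ _ _ => trivial⟩
  obtain ⟨T₁, hT₁, hT₁D, hT₁c, hT₁K, hcov₁⟩ := exists_partial_transversal hD hDK
    (Set.mem_singleton 1)
    (Set.singleton_subset_iff.2 hD.one_mem) trivial_prefixClosed (by rintro _ rfl _ rfl -; simp)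
  obtain ⟨T₂, hT₁₂, -, hT₂c, hT₂K, hcov₂⟩ := exists_partial_transversal univ_invariant
    (fun _ _ _ _ => id) (hT₁ rfl) (Set.subset_univ T₁) hT₁c hT₁K
  have exists_rep (x : FreeGroup A ⧸ K) :
      ∃ τ ∈ T₂, ((τ⁻¹ : FreeGroup A) : FreeGroup A ⧸ K) = x := by
    obtain ⟨g, rfl⟩ := QuotientGroup.mk_surjective x
    obtain ⟨τ, hτ, hgτ⟩ := hcov₂ g⁻¹ trivial
    exact ⟨τ, hτ, by rw [← inv_inv g, eq_comm, mk_inv_eq_mk_inv_iff.2 hgτ]⟩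
  choose rep rep_mem mk_rep_inv using exists_rep
  have rep_mk {τ g : FreeGroup A} (hτ : τ ∈ T₂) (h : g * τ⁻¹ ∈ K) :
      rep ((g⁻¹ : FreeGroup A) : FreeGroup A ⧸ K) = τ := by
    refine mul_inv_eq_one.1 (Subgroup.mem_bot.1 (hT₂K _ (rep_mem _) τ hτ ?_))
    rw [← mk_inv_eq_mk_inv_iff, mk_rep_inv, mk_inv_eq_mk_inv_iff.2 h]
  have range_rep : Set.range rep = T₂ :=
    (Set.range_subset_iff.2 rep_mem).antisymm fun τ hτ =>
      ⟨_, rep_mk hτ (by rw [mul_inv_cancel]; exact one_mem K)⟩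
  refine ⟨⟨rep, mk_rep_inv, range_rep ▸ hT₂c⟩, fun g hg => ?_⟩
  obtain ⟨τ, hτ, hgτ⟩ := hcov₁ g hg
  change rep _ ∈ D
  rw [rep_mk (hT₁₂ hτ) hgτ]
  exact hT₁D hτ

end SchreierTransversals

namespace IsFreeBasis

theorem closure_of_subset {G : Type} [Group G] {K : Subgroup G} {B C : Set G}
    (hC : IsFreeBasis C K) (hBC : B ⊆ C) : IsFreeBasis B (Subgroup.closure B) := by
  refine ⟨rfl, ?_⟩
  have lift_comp : FreeGroup.lift (Subtype.val : B → G) =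
      (FreeGroup.lift (Subtype.val : C → G)).comp (FreeGroup.map (Set.inclusion hBC)) :=
    FreeGroup.ext_hom _ _ fun b => by simp
  rw [lift_comp]
  exact hC.2.comp (FreeGroup.map_injective (Set.inclusion_injective hBC))

end IsFreeBasis

theorem mk_mul_inv {G : Type*} [Group G] {K : Subgroup G} (g h : G) :
    (((g * h)⁻¹ : G) : G ⧸ K) = h⁻¹ • ((g⁻¹ : G) : G ⧸ K) := by
  rw [mul_inv_rev, MulAction.Quotient.smul_coe, smul_eq_mul]

theorem smul_mk_one {G : Type*} [Group G] {K : Subgroup G} (g : G) :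
    g • ((1 : G) : G ⧸ K) = (g : G ⧸ K) := by
  rw [MulAction.Quotient.smul_coe, smul_eq_mul, mul_one]

namespace SchreierTransversal

variable {A : Type} {D : Set (FreeGroup A)} {L K : Subgroup (FreeGroup A)}
  (T : SchreierTransversal K) {g : FreeGroup A} {x : FreeGroup A ⧸ K} {b : Ltr A}

theorem mul_inv_rep_mem (g : FreeGroup A) : g * (T.rep (g⁻¹ : FreeGroup A))⁻¹ ∈ K := by
  rw [← mk_inv_eq_mk_inv_iff, T.mk_rep_inv]

theorem mk_rep_mul_inv (x : FreeGroup A ⧸ K) (g : FreeGroup A) :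
    (((T.rep x * g)⁻¹ : FreeGroup A) : FreeGroup A ⧸ K) = g⁻¹ • x := by
  rw [mk_mul_inv, T.mk_rep_inv]

theorem rep_mk_inv_of_mem_range (hg : g ∈ Set.range T.rep) : T.rep (g⁻¹ : FreeGroup A) = g := by
  obtain ⟨x, rfl⟩ := hg
  rw [T.mk_rep_inv]

theorem rep_mk_one : T.rep (1 : FreeGroup A) = 1 := by
  obtain ⟨W, hW, hWx⟩ := exists_isReduced_mk_eq (T.rep (1 : FreeGroup A))
  have := T.rep_mk_inv_of_mem_range (T.prefixClosed [] W hW ⟨_, hWx.symm⟩)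
  rwa [mk_nil, inv_one] at this

/-- The Schreier generator of an edge of the coset graph of `K`, namely of the edge labelled by `b`
starting at `x`. -/
def gen (x : FreeGroup A ⧸ K) (b : Ltr A) : FreeGroup A :=
  T.rep x * b.toFreeGroup * (T.rep (b.toFreeGroup⁻¹ • x))⁻¹

theorem gen_inv (x : FreeGroup A ⧸ K) (b : Ltr A) :
    T.gen (b.toFreeGroup⁻¹ • x) b.inv = (T.gen x b)⁻¹ := by
  simp [gen, Ltr.toFreeGroup_inv, mul_assoc]

theorem gen_mem (x : FreeGroup A ⧸ K) (b : Ltr A) : T.gen x b ∈ K := by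
  have := T.mul_inv_rep_mem (T.rep x * b.toFreeGroup)
  rwa [T.mk_rep_mul_inv] at this

/-- The nontrivial Schreier generators of the positively labelled edges with both ends in `D`. -/
def gens (D : Set (FreeGroup A)) : Set (FreeGroup A) :=
  {g | g ≠ 1 ∧ ∃ x a, T.rep x ∈ D ∧ T.rep x * FreeGroup.of a ∈ D ∧ T.gen x (a, true) = g}

theorem gens_mono {D' : Set (FreeGroup A)} (h : D ⊆ D') : T.gens D ⊆ T.gens D' :=
  fun _ ⟨hg, x, a, hx, hxa, hgen⟩ => ⟨hg, x, a, h hx, h hxa, hgen⟩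

section Generation

variable (hD : IsInvariantSubtree L D) (hDK : QuotientEmbeds D L K)
  (hrep : ∀ g ∈ D, T.rep (g⁻¹ : FreeGroup A) ∈ D)

include hDK hrep in
theorem mul_inv_rep_mem_of_mem (hg : g ∈ D) : g * (T.rep (g⁻¹ : FreeGroup A))⁻¹ ∈ L :=
  hDK g hg _ (hrep g hg) (T.mul_inv_rep_mem g)

include hD hDK hrep

theorem rep_mul_mem {h : FreeGroup A} (hg : g ∈ D) (hgh : g * h ∈ D) :
    T.rep (g⁻¹ : FreeGroup A) * h ∈ D := by
  refine (hD.mem_iff_of_mul_inv_mem ?_).1 hgh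
  rw [← div_eq_mul_inv, mul_div_mul_right_eq_div, div_eq_mul_inv]
  exact T.mul_inv_rep_mem_of_mem hDK hrep hg

theorem gen_mem_closure_gens (hx : T.rep x ∈ D) (hxb : T.rep x * b.toFreeGroup ∈ D) :
    T.gen x b ∈ Subgroup.closure (T.gens D) := by
  have positive {x : FreeGroup A ⧸ K} {a : A} (hx : T.rep x ∈ D)
      (hxa : T.rep x * FreeGroup.of a ∈ D) : T.gen x (a, true) ∈ Subgroup.closure (T.gens D) := by
    by_cases hone : T.gen x (a, true) = 1
    · exact hone ▸ one_mem _
    · exact Subgroup.subset_closure ⟨hone, x, a, hx, hxa, rfl⟩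
  obtain ⟨a, _ | _⟩ := b
  · rw [← inv_mem_iff, ← T.gen_inv]
    have mk_eq := T.mk_rep_mul_inv x (Ltr.toFreeGroup (a, false))
    refine positive (mk_eq ▸ hrep _ hxb) (mk_eq ▸ T.rep_mul_mem hD hDK hrep hxb ?_)
    exact (inv_mul_cancel_right (T.rep x) (FreeGroup.of a)).symm ▸ hx
  · exact positive hx hxb

theorem mul_inv_rep_mem_closure_gens (hg : g ∈ D) :
    g * (T.rep (g⁻¹ : FreeGroup A))⁻¹ ∈ Subgroup.closure (T.gens D) := by
  obtain ⟨W, hW, rfl⟩ := exists_isReduced_mk_eq g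
  induction W using List.reverseRecOn with
  | nil => simp [mk_nil, T.rep_mk_one]
  | append_singleton V b ih =>
    have hV : FreeGroup.mk V ∈ D := hD.prefixClosed V [b] hW hg
    rw [mk_append, mk_singleton] at hg ⊢
    have := mul_mem (ih (isReduced_of_append_left hW) hV) (T.gen_mem_closure_gens hD hDK hrep
      (hrep _ hV) (T.rep_mul_mem hD hDK hrep hV hg))
    rw [gen, ← mk_mul_inv] at this
    simpa only [mul_assoc, inv_mul_cancel_left] using this

theorem closure_gens (hLK : L ≤ K) : Subgroup.closure (T.gens D) = L := by
  refine le_antisymm ((Subgroup.closure_le L).2 ?_) fun l hl => ?_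
  · rintro _ ⟨-, x, a, -, hxa, rfl⟩
    have := T.mul_inv_rep_mem_of_mem hDK hrep hxa
    rwa [T.mk_rep_mul_inv] at this
  · have := T.mul_inv_rep_mem_closure_gens hD hDK hrep (hD.mem_of_mem hl)
    have mk_eq : ((l⁻¹ : FreeGroup A) : FreeGroup A ⧸ K) = (1 : FreeGroup A) := by
      simpa [QuotientGroup.eq] using hLK hl
    rwa [mk_eq, T.rep_mk_one, inv_one, mul_one] at this

end Generation

section Freeness

variable {G : Type*} [Group G] {c : FreeGroup A → FreeGroup A ⧸ K → G} (hc : IsCocycle c)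
  (hgen : ∀ x a, T.gen x (a, true) = 1 → c (FreeGroup.of a) x = 1)

include hc hgen

theorem cocycle_eq_one_of_gen_eq_one (hxb : T.gen x b = 1) : c b.toFreeGroup x = 1 := by
  obtain ⟨a, _ | _⟩ := b
  · have key := hgen _ a ((T.gen_inv x (a, false)).trans (inv_eq_one.2 hxb))
    rw [← inv_eq_one, ← hc.map_inv]
    exact key
  · exact hgen x a hxb

theorem cocycle_rep (x : FreeGroup A ⧸ K) : c (T.rep x) (1 : FreeGroup A) = 1 := by
  obtain ⟨W, hW, hWx⟩ := exists_isReduced_mk_eq (T.rep x)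
  have hWT : FreeGroup.mk W ∈ Set.range T.rep := ⟨x, hWx.symm⟩
  rw [← hWx]
  clear hWx
  induction W using List.reverseRecOn with
  | nil => exact hc.map_one _
  | append_singleton V b ih =>
    have hVT := T.prefixClosed V [b] hW hWT
    rw [mk_append, mk_singleton] at hWT ⊢
    rw [hc, ih (isReduced_of_append_left hW) hVT, one_mul]
    refine T.cocycle_eq_one_of_gen_eq_one hc hgen ?_
    rw [gen, smul_mk_one, ← mk_mul_inv, T.rep_mk_inv_of_mem_range hVT,
      T.rep_mk_inv_of_mem_range hWT, mul_inv_cancel]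

theorem cocycle_gen (x : FreeGroup A ⧸ K) (b : Ltr A) :
    c (T.gen x b) (1 : FreeGroup A) = c b.toFreeGroup x := by
  have inv_rep_smul (x : FreeGroup A ⧸ K) :
      (T.rep x)⁻¹ • ((1 : FreeGroup A) : FreeGroup A ⧸ K) = x := by
    rw [smul_mk_one, T.mk_rep_inv]
  have rep_inv (x : FreeGroup A ⧸ K) : c (T.rep x)⁻¹ x = 1 := by
    rw [← inv_one, ← T.cocycle_rep hc hgen x, ← hc.map_inv, inv_rep_smul]
  rw [gen, hc, hc, T.cocycle_rep hc hgen, mul_inv_rev, mul_smul, inv_rep_smul, rep_inv, one_mul,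
    mul_one]

end Freeness

theorem isFreeBasis_gens_univ : IsFreeBasis (T.gens Set.univ) K := by
  classical
  let I := {p : (FreeGroup A ⧸ K) × A // T.gen p.1 (p.2, true) ≠ 1}
  obtain ⟨c, hc, hcγ⟩ := exists_isCocycle fun (x : FreeGroup A ⧸ K) (a : A) =>
    if h : T.gen x (a, true) ≠ 1 then FreeGroup.of (⟨(x, a), h⟩ : I) else 1
  have range_gen : (Set.range fun i : I => T.gen i.1.1 (i.1.2, true)) = T.gens Set.univ := by
    ext g
    constructor
    · rintro ⟨⟨⟨x, a⟩, hxa⟩, rfl⟩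
      exact ⟨hxa, x, a, trivial, trivial, rfl⟩
    · rintro ⟨hg, x, a, -, -, rfl⟩
      exact ⟨⟨(x, a), hg⟩, rfl⟩
  rw [← range_gen]
  refine IsFreeBasis.of_family_of_hom (f := fun i : I => (⟨_, T.gen_mem i.1.1 (i.1.2, true)⟩ : K))
    (φ := (hc.stabilizerHom ((1 : FreeGroup A) : FreeGroup A ⧸ K)).comp
      (Subgroup.inclusion (MulAction.stabilizer_quotient K).ge)) ?_ fun i => ?_
  · rw [range_gen]
    exact T.closure_gens ⟨trivial, fun _ _ _ _ => trivial, fun _ _ _ _ => trivial⟩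
      (fun _ _ _ _ => id) (fun _ _ => trivial) le_rfl
  · refine (T.cocycle_gen hc (fun x a h => ?_) i.1.1 (i.1.2, true)).trans ?_
    · rw [hcγ, dif_neg (not_not.2 h)]
    · exact (hcγ _ _).trans (dif_pos i.2)

end SchreierTransversal

theorem freeFactor_of_quotientEmbeds {A : Type} {L K : Subgroup (FreeGroup A)} (hLK : L ≤ K)
    (h : QuotientEmbeds (coreTree L) L K) : FreeFactor L K := by
  obtain ⟨T, hT⟩ := exists_schreierTransversal isInvariantSubtree_coreTree h
  have closure_eq := T.closure_gens isInvariantSubtree_coreTree h hT hLK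
  have subset := T.gens_mono (Set.subset_univ (coreTree L))
  have isFreeBasis := T.isFreeBasis_gens_univ.closure_of_subset subset
  rw [closure_eq] at isFreeBasis
  exact ⟨_, _, isFreeBasis, T.isFreeBasis_gens_univ, subset⟩

namespace Autom

variable {A : Type} {M N : Autom A} {H K L : Subgroup (FreeGroup A)} {D : Set (FreeGroup A)}
  {g h : FreeGroup A} {p q : M.Q}

/-- `M` is a connected dual automaton whose closed paths at the initial state represent the
elements of `H`. In contrast to `Represents`, this is preserved by each single elementary
reduction. -/
structure Presents (M : Autom A) (H : Subgroup (FreeGroup A)) : Prop where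
  dual : M.Dual
  exists_connects : ∀ q, ∃ g, M.Connects M.q0 g q
  connects_iff : ∀ {g}, M.Connects M.q0 g M.q0 ↔ g ∈ H

namespace Presents

theorem subgroup_unique (h : M.Presents H) (h' : M.Presents K) : H = K :=
  SetLike.ext fun _ => h.connects_iff.symm.trans h'.connects_iff

theorem trim (h : M.Presents H) : M.Trim := fun q =>
  let ⟨_, V, hV, _⟩ := h.exists_connects q
  ⟨V, _, hV, hV.invRev h.dual⟩

theorem langRho_eq (h : M.Presents H) : M.langRho = H := Set.ext fun _ => h.connects_iff

theorem represents (h : M.Presents H) (hdet : M.Deterministic) (hred : M.IsRed) : M.Represents H :=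
  ⟨⟨hdet, h.trim, h.dual⟩, hred, h.langRho_eq⟩

theorem mul_inv_mem (hM : M.Presents H) (hg : M.Connects M.q0 g p) (hh : M.Connects M.q0 h p) :
    g * h⁻¹ ∈ H :=
  hM.connects_iff.1 (hg.mul (hh.inv hM.dual))

theorem isInvariantSubtree (hM : M.Presents H) (hdet : M.Deterministic) :
    IsInvariantSubtree H {g | ∃ q, M.Connects M.q0 g q} where
  one_mem := ⟨_, .one _⟩
  mul_mem _ hl _ := fun ⟨q, hq⟩ => ⟨q, (hM.connects_iff.2 hl).mul hq⟩
  prefixClosed _ _ hVW := fun ⟨_, hq⟩ =>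
    let ⟨r, hr, _⟩ := path_append_iff.1 (hq.path hdet hM.dual hVW)
    ⟨r, hr.connects⟩

theorem exists_connects_of_mem_coreTree (hM : M.Presents H) (hdet : M.Deterministic)
    (hg : g ∈ coreTree H) : ∃ q, M.Connects M.q0 g q :=
  (hM.isInvariantSubtree hdet).coreTree_subset hg

end Presents

theorem Represents.presents (h : M.Represents H) : M.Presents H :=
  ⟨h.1.2.2, fun q => let ⟨_, _, hV, _⟩ := h.1.2.1 q; ⟨_, hV.connects⟩,
    fun {g} => Set.ext_iff.1 h.2.2 g⟩

section Stallings

theorem mul_mul_inv_mem_of_path {hD : 1 ∈ D} {x y : D} {W : List (Ltr A)}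
    (hW : (quotientAutom L D hD).Path (state L hD x) W (state L hD y)) :
    (x : FreeGroup A) * FreeGroup.mk W * (y : FreeGroup A)⁻¹ ∈ L := by
  induction W generalizing x with
  | nil => simpa [mk_nil] using state_eq_iff.1 (path_nil_iff.1 hW)
  | cons a W ih =>
    obtain ⟨_, ⟨x', z, hx, rfl, hz⟩, hW⟩ := path_cons_iff.1 hW
    have hxx' : state L hD x' = state L hD x := hx
    have := mul_mem (inv_mem (state_eq_iff.1 hxx')) (ih hW)
    rw [hz] at this
    simpa [mk_cons, mul_assoc] using this

theorem quotientAutom_presents (hD : IsInvariantSubtree L D) :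
    (quotientAutom L D hD.one_mem).Presents L where
  dual := quotientAutom_dual
  exists_connects q := by
    obtain ⟨x, rfl⟩ := state_surjective q
    exact ⟨x, connects_state hD.prefixClosed subset_rfl _ x.2⟩
  connects_iff {g} := by
    constructor
    · rintro ⟨W, hW, rfl⟩
      simpa using mul_mul_inv_mem_of_path (x := ⟨1, hD.one_mem⟩) (y := ⟨1, hD.one_mem⟩) hW
    · intro hg
      have := connects_state hD.prefixClosed subset_rfl hD.one_mem (L := L) (hD.mem_of_mem hg)
      have state_eq : state L hD.one_mem ⟨g, hD.mem_of_mem hg⟩ = (quotientAutom L D _).q0 :=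
        state_eq_iff.2 (by simpa using hg)
      rwa [state_eq] at this

/-- The Stallings automaton of `L`, a model of `Γ_A(L)`. -/
abbrev stallings (L : Subgroup (FreeGroup A)) : Autom A :=
  quotientAutom L (coreTree L) isInvariantSubtree_coreTree.one_mem

theorem stallings_isRed : (stallings L).IsRed := fun q => by
  obtain ⟨⟨x, V, W, hVW, hL, hx⟩, rfl⟩ := state_surjective q
  have hV := staysIn_append_iff.1 (staysIn_coreTree hVW hL)
  have state_V : state L isInvariantSubtree_coreTree.one_mem ⟨x, V, W, hVW, hL, hx⟩ =
      state L _ ⟨FreeGroup.mk V, hV.1 V List.prefix_rfl⟩ := state_eq_iff.2 hx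
  have state_VW : state L isInvariantSubtree_coreTree.one_mem
      ⟨FreeGroup.mk V * FreeGroup.mk W, hV.2 W List.prefix_rfl⟩ = (stallings L).q0 := by
    refine state_eq_iff.2 ?_
    change FreeGroup.mk V * FreeGroup.mk W * 1⁻¹ ∈ L
    rwa [inv_one, mul_one, ← mk_append]
  refine ⟨V, W, isReducedWord_iff.2 hVW, ?_, ?_⟩
  · rw [state_V]
    have := connects_state coreTree_prefixClosed subset_rfl
      isInvariantSubtree_coreTree.one_mem (L := L) (hV.1 V List.prefix_rfl)
    exact this.path quotientAutom_deterministic quotientAutom_dual (isReduced_of_append_left hVW)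
  · rw [state_V, ← state_VW]
    exact path_state hV.2

theorem stallings_represents (L : Subgroup (FreeGroup A)) : (stallings L).Represents L :=
  (quotientAutom_presents isInvariantSubtree_coreTree).represents quotientAutom_deterministic
    stallings_isRed

theorem exists_finite_forall_mem_coreTree (hL : L.FG) :
    ∃ P : Set (FreeGroup A), P.Finite ∧ ∀ x ∈ coreTree L, ∃ y ∈ P, x * y⁻¹ ∈ L := by
  classical
  obtain ⟨S, rfl⟩ := hL
  let P : Set (List (Ltr A)) := insert [] (⋃ s ∈ S, {V | V <+: s.toWord})
  have hP : P.Finite := (Set.Finite.biUnion S.finite_toSet fun s _ =>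
    (List.finite_toSet s.toWord.inits).subset fun V hV => (List.mem_inits V _).2 hV).insert []
  refine ⟨FreeGroup.mk '' P, hP.image _, ?_⟩
  refine coreTree_closure_subset (D := {x | ∃ y ∈ FreeGroup.mk '' P, x * y⁻¹ ∈ _})
    ⟨1, ⟨[], Set.mem_insert _ _, mk_nil⟩, by simp⟩
    (fun l hl x ⟨y, hy, hx⟩ => ⟨y, hy, by simpa [mul_assoc] using mul_mem hl hx⟩)
    fun s hs => ⟨s.toWord, FreeGroup.mk_toWord, fun V hV => ⟨_, ⟨V, Or.inr ?_, rfl⟩, ?_⟩⟩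
  · exact Set.mem_biUnion hs hV
  · rw [mul_inv_cancel]
    exact one_mem _

theorem stallings_finite (hL : L.FG) : Finite (stallings L).Q := by
  obtain ⟨P, hP, hPL⟩ := exists_finite_forall_mem_coreTree hL
  have finite : (Subtype.val ⁻¹' P : Set (coreTree L)).Finite :=
    hP.preimage Subtype.val_injective.injOn
  have := finite.to_subtype
  refine Finite.of_surjective (fun x : (Subtype.val ⁻¹' P : Set (coreTree L)) => state L _ x)
    fun q => ?_
  obtain ⟨x, rfl⟩ := state_surjective q
  obtain ⟨y, hyP, hxy⟩ := hPL x x.2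
  have hy := (isInvariantSubtree_coreTree.mem_iff_of_mul_inv_mem hxy).1 x.2
  exact ⟨⟨⟨y, hy⟩, hyP⟩, (state_eq_iff.2 hxy).symm⟩

end Stallings

end Autom

theorem graphicalFF_iff {A : Type} {L K : Subgroup (FreeGroup A)} (hLK : L ≤ K) :
    GraphicalFF L K ↔ QuotientEmbeds (coreTree L) L K := by
  constructor
  · rintro ⟨-, ML, MK, hL, hK, ψ, hψ, hψ0, hψE⟩ x hx y hy hxy
    obtain ⟨p, hp⟩ := hL.presents.exists_connects_of_mem_coreTree hL.1.1 hx
    obtain ⟨q, hq⟩ := hL.presents.exists_connects_of_mem_coreTree hL.1.1 hy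
    have hψp := hp.map hψE
    have hψq := (hK.presents.connects_iff.2 hxy).mul (hψ0 ▸ hq.map hψE)
    rw [hψ0] at hψp
    rw [inv_mul_cancel_right] at hψq
    obtain rfl := hψ (hψp.unique hK.1.1 hK.1.2.2 hψq)
    exact hL.presents.mul_inv_mem hp hq
  · intro h
    let incl : coreTree L → coreTree K := Set.inclusion (coreTree_mono hLK)
    have incl_rel {x y : coreTree L} (hxy : (QuotientGroup.rightRel L) x y) :
        (QuotientGroup.rightRel K) (incl x) (incl y) :=
      QuotientGroup.rightRel_apply.2 (hLK (QuotientGroup.rightRel_apply.1 hxy))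
    refine ⟨hLK, Autom.stallings L, Autom.stallings K, Autom.stallings_represents L,
      Autom.stallings_represents K, Quotient.map incl fun _ _ => incl_rel, ?_, rfl, ?_⟩
    · intro p q hpq
      obtain ⟨x, rfl⟩ := Autom.state_surjective p
      obtain ⟨y, rfl⟩ := Autom.state_surjective q
      exact Autom.state_eq_iff.2 (h x x.2 y y.2
        (Autom.state_eq_iff (x := incl x) (y := incl y) |>.1 hpq))
    · rintro _ a _ ⟨x, y, rfl, rfl, hxy⟩
      exact ⟨incl x, incl y, rfl, rfl, hxy⟩

namespace Autom

variable {A : Type} {M N : Autom A} {H K : Subgroup (FreeGroup A)} {g h : FreeGroup A}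
  {p q : M.Q}

namespace Presents

theorem mul_mul_inv_mem_of_path_image (hM : M.Presents H) {φ : M.Q → N.Q}
    (hE : ∀ r a s, (r, a, s) ∈ N.E → ∃ r' s', (r', a, s') ∈ M.E ∧ φ r' = r ∧ φ s' = s)
    (hK : ∀ {x y g h}, M.Connects M.q0 g x → M.Connects M.q0 h y → φ x = φ y → g * h⁻¹ ∈ K)
    {W : List (Ltr A)} (hW : N.Path (φ p) W (φ q)) (hg : M.Connects M.q0 g p)
    (hh : M.Connects M.q0 h q) : g * FreeGroup.mk W * h⁻¹ ∈ K := by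
  induction W generalizing p g with
  | nil => simpa [mk_nil] using hK hg hh (path_nil_iff.1 hW)
  | cons a W ih =>
    obtain ⟨_, he, hW⟩ := path_cons_iff.1 hW
    obtain ⟨p', r', he', hp', rfl⟩ := hE _ _ _ he
    obtain ⟨k, hk⟩ := hM.exists_connects p'
    have := mul_mem (hK hg hk hp'.symm) (ih hW (hk.mul (connects_of_edge he')))
    simpa [mk_cons, mul_assoc] using this

theorem mul_inv_mem_of_identification (hM : M.Presents H) {φ : M.Q → N.Q}
    (hφ : ∀ x y, φ x = φ y ↔ x = y ∨ (x = p ∧ y = q) ∨ (x = q ∧ y = p))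
    (hg : M.Connects M.q0 g p) (hh : M.Connects M.q0 h q) {x y : M.Q} {k l : FreeGroup A}
    (hk : M.Connects M.q0 k x) (hl : M.Connects M.q0 l y) (hxy : φ x = φ y) :
    k * l⁻¹ ∈ H ⊔ Subgroup.zpowers (g * h⁻¹) := by
  have mem_of_mem {u : FreeGroup A} (hu : u ∈ H) : u ∈ H ⊔ Subgroup.zpowers (g * h⁻¹) :=
    Subgroup.mem_sup_left hu
  have mem : g * h⁻¹ ∈ H ⊔ Subgroup.zpowers (g * h⁻¹) :=
    Subgroup.mem_sup_right (Subgroup.mem_zpowers _)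
  rcases (hφ x y).1 hxy with rfl | ⟨rfl, rfl⟩ | ⟨rfl, rfl⟩
  · exact mem_of_mem (hM.mul_inv_mem hk hl)
  · have := mul_mem (mul_mem (mem_of_mem (hM.mul_inv_mem hk hg)) mem)
      (mem_of_mem (hM.mul_inv_mem hh hl))
    simpa [mul_assoc] using this
  · have := mul_mem (mul_mem (mem_of_mem (hM.mul_inv_mem hk hh)) (inv_mem mem))
      (mem_of_mem (hM.mul_inv_mem hg hl))
    simpa [mul_assoc] using this

theorem identification (hM : M.Presents H) (hN : M.IsIdentification p q N)
    (hg : M.Connects M.q0 g p) (hh : M.Connects M.q0 h q) :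
    N.Presents (H ⊔ Subgroup.zpowers (g * h⁻¹)) := by
  obtain ⟨φ, hsurj, h0, hφ, hE⟩ := hN
  have edge_map (r a s) (he : (r, a, s) ∈ M.E) : (φ r, a, φ s) ∈ N.E := (hE _).2 ⟨_, he, rfl⟩
  have edge_lift (r a s) (he : (r, a, s) ∈ N.E) :
      ∃ r' s', (r', a, s') ∈ M.E ∧ φ r' = r ∧ φ s' = s := by
    obtain ⟨⟨r', a', s'⟩, he', heq⟩ := (hE _).1 he
    simp only [Prod.mk.injEq] at heq
    obtain ⟨rfl, rfl, rfl⟩ := heq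
    exact ⟨r', s', he', rfl, rfl⟩
  have edge_inv (r a s) (he : (r, a, s) ∈ N.E) : (s, a.inv, r) ∈ N.E := by
    obtain ⟨r', s', he', rfl, rfl⟩ := edge_lift r a s he
    exact edge_map _ _ _ ((hM.dual _ _ _).1 he')
  have dual : N.Dual := fun r a s =>
    ⟨edge_inv r a s, fun he => a.inv_inv ▸ edge_inv _ _ _ he⟩
  refine ⟨dual, fun x => ?_, fun {k} => ⟨fun ⟨W, hW, hk⟩ => ?_, fun hk => ?_⟩⟩
  · obtain ⟨x, rfl⟩ := hsurj x
    obtain ⟨k, hk⟩ := hM.exists_connects x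
    exact ⟨k, h0 ▸ hk.map edge_map⟩
  · rw [← h0] at hW
    simpa [hk] using hM.mul_mul_inv_mem_of_path_image edge_lift
      (hM.mul_inv_mem_of_identification hφ hg hh) hW (.one _) (.one _)
  · suffices H ⊔ Subgroup.zpowers (g * h⁻¹) ≤ N.loops dual from this hk
    have hφpq : φ p = φ q := (hφ p q).2 (.inr (.inl ⟨rfl, rfl⟩))
    refine sup_le (fun l hl => ?_) (Subgroup.zpowers_le.2 ?_)
    · exact (mem_loops_iff dual).2 (h0 ▸ (hM.connects_iff.2 hl).map edge_map)
    · have := (hg.map edge_map).mul (hφpq ▸ (hh.map edge_map).inv dual)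
      exact (mem_loops_iff dual).2 (h0 ▸ this)

theorem red1 (hM : M.Presents H) (hN : Red1 M N) : N.Presents H := by
  obtain ⟨p, q, r, a, -, hp, hq, hpq⟩ := hN
  obtain ⟨g, hg⟩ := hM.exists_connects r
  have := hM.identification hpq (hg.mul (connects_of_edge hp)) (hg.mul (connects_of_edge hq))
  rwa [mul_inv_cancel, Subgroup.zpowers_one_eq_bot, sup_bot_eq] at this

theorem of_embedding (hM : M.Presents H) {φ : N.Q → M.Q} (h0 : φ N.q0 = M.q0)
    (hE : ∀ r a s, (r, a, s) ∈ N.E ↔ (φ r, a, φ s) ∈ M.E)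
    (hφ : ∀ {x y g}, M.Connects (φ x) g (φ y) → N.Connects x g y) : N.Presents H where
  dual r a s := by rw [hE, hE, hM.dual]
  exists_connects x :=
    let ⟨g, hg⟩ := hM.exists_connects (φ x)
    ⟨g, hφ (h0 ▸ hg)⟩
  connects_iff {g} := by
    rw [← hM.connects_iff, ← h0]
    exact ⟨fun hg => hg.map fun r a s => (hE r a s).1, hφ⟩

theorem isomorphic (hM : M.Presents H) (hMN : Isomorphic M N) : N.Presents H := by
  obtain ⟨φ, hφ, hφ'⟩ := hMN
  have edge_iff (r a s) : (r, a, s) ∈ N.E ↔ (φ.symm r, a, φ.symm s) ∈ M.E :=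
    ⟨hφ'.2 r a s, fun he => by simpa using hφ.2 _ _ _ he⟩
  exact hM.of_embedding hφ'.1 edge_iff fun hg => by simpa using hg.map hφ.2

end Presents

section Leaves

variable {r s t : M.Q} {a b : Ltr A} {W : List (Ltr A)}

theorem ne_leaf_of_isReduced
    (hq : ∀ e ∈ M.E, e.1 = q ∨ e.2.2 = q → e = (p, a, q) ∨ e = (q, a.inv, p)) (hr : r ≠ q)
    (ht : t ≠ q) (he : (r, b, s) ∈ M.E) (hW : M.Path s W t)
    (hbW : FreeGroup.IsReduced (b :: W)) : s ≠ q := by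
  rintro rfl
  rcases W with _ | ⟨c, W⟩
  · exact ht (path_nil_iff.1 hW).symm
  · obtain ⟨_, hc, -⟩ := path_cons_iff.1 hW
    have hb := hq _ he (.inr rfl)
    have hc := hq _ hc (.inl rfl)
    have := (isReduced_cons_cons_iff.1 hbW).1
    grind

theorem path_of_deletion {φ : N.Q → M.Q} (hφ : Injective φ) (hrange : Set.range φ = {x | x ≠ q})
    (hE : ∀ e, e ∈ N.E ↔ (φ e.1, e.2.1, φ e.2.2) ∈ M.E)
    (hq : ∀ e ∈ M.E, e.1 = q ∨ e.2.2 = q → e = (p, a, q) ∨ e = (q, a.inv, p)) {x y : N.Q}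
    (hW : M.Path (φ x) W (φ y)) (hW' : FreeGroup.IsReduced W) : N.Path x W y := by
  have hne (z) : φ z ≠ q := hrange.subset ⟨z, rfl⟩
  induction W generalizing x with
  | nil => exact path_nil_iff.2 (hφ (path_nil_iff.1 hW))
  | cons b W ih =>
    obtain ⟨s, he, hW⟩ := path_cons_iff.1 hW
    obtain ⟨z, rfl⟩ := hrange.superset (ne_leaf_of_isReduced hq (hne x) (hne y) he hW hW')
    exact path_cons_iff.2 ⟨z, (hE _).2 he, ih hW (isReduced_of_append_right (V := [b]) hW')⟩

theorem Red2.deterministic (hN : Red2 M N) (hdet : M.Deterministic) : N.Deterministic := by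
  obtain ⟨_, _, _, -, -, -, -, φ, hφ, -, -, hE⟩ := hN
  exact fun x b y y' hy hy' => hφ (hdet _ _ _ _ ((hE _).1 hy) ((hE _).1 hy'))

theorem Presents.red2 (hM : M.Presents H) (hdet : M.Deterministic) (hN : Red2 M N) :
    N.Presents H := by
  obtain ⟨p, q, a, -, -, -, hq, φ, hφ, hrange, h0, hE⟩ := hN
  refine hM.of_embedding h0 (fun r b s => hE (r, b, s)) fun {x y g} hg => ?_
  obtain ⟨W, hW, rfl⟩ := exists_isReduced_mk_eq g
  exact (path_of_deletion hφ hrange hE hq (hg.path hdet hM.dual hW) hW).connects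

end Leaves

section Steps

open Relation

theorem Presents.reflTransGen_red1 (hM : M.Presents H) (hN : ReflTransGen Red1 M N) :
    N.Presents H := by
  induction hN with
  | refl => exact hM
  | tail _ hN ih => exact ih.red1 hN

theorem Presents.reflTransGen_red2 (hM : M.Presents H) (hdet : M.Deterministic)
    (hN : ReflTransGen Red2 M N) : N.Presents H ∧ N.Deterministic := by
  induction hN with
  | refl => exact ⟨hM, hdet⟩
  | tail _ hN ih => exact ⟨ih.1.red2 ih.2 hN, hN.deterministic ih.2⟩

theorem Presents.reductionOf (hM : M.Presents H) (hN : ReductionOf M N) :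
    N.Presents H ∧ N.Deterministic :=
  let ⟨_, hM₁, hdet, hN, _⟩ := hN
  (hM.reflTransGen_red1 hM₁).reflTransGen_red2 hdet hN

theorem Presents.iStepAny (hM : M.Presents H) (hN : IStepAny M N) :
    ∃ t, N.Presents (H ⊔ Subgroup.zpowers t) := by
  obtain ⟨p, q, -, M', N', hM', hN', hiso⟩ := hN
  obtain ⟨g, hg⟩ := hM.exists_connects p
  obtain ⟨h, hh⟩ := hM.exists_connects q
  exact ⟨g * h⁻¹, ((hM.identification hM' hg hh).reductionOf hN').1.isomorphic hiso⟩

end Steps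

section Existence

open Relation

theorem exists_isIdentification (hpq : p ≠ q) : ∃ N : Autom A, M.IsIdentification p q N := by
  classical
  let φ (x : M.Q) : {x // x ≠ q} := if h : x = q then ⟨p, hpq⟩ else ⟨x, h⟩
  refine ⟨⟨_, φ M.q0, {e | ∃ e' ∈ M.E, e = (φ e'.1, e'.2.1, φ e'.2.2)}⟩, φ,
    fun x => ⟨x, dif_neg x.2⟩, rfl, fun x y => ?_, fun _ => Iff.rfl⟩
  simp only [φ]
  grind

theorem exists_isDeletion (hq : q ≠ M.q0) : ∃ N : Autom A, M.IsDeletion q N :=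
  ⟨⟨{x : M.Q // x ≠ q}, ⟨M.q0, hq.symm⟩, {e | (e.1.1, e.2.1, e.2.2.1) ∈ M.E}⟩, Subtype.val,
    Subtype.val_injective, Subtype.range_val, rfl, fun _ => Iff.rfl⟩

theorem IsIdentification.finite_and_card_lt [Finite M.Q] (hpq : p ≠ q)
    (hN : M.IsIdentification p q N) : Finite N.Q ∧ Nat.card N.Q < Nat.card M.Q := by
  obtain ⟨φ, hsurj, -, hφ, -⟩ := hN
  refine ⟨.of_surjective φ hsurj, (Nat.card_le_card_of_surjective φ hsurj).lt_of_ne fun hcard => ?_⟩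
  have := (Nat.bijective_iff_surjective_and_card φ).2 ⟨hsurj, hcard.symm⟩
  exact hpq (this.1 ((hφ p q).2 (.inr (.inl ⟨rfl, rfl⟩))))

theorem IsDeletion.finite_and_card_lt [Finite M.Q] (hN : M.IsDeletion q N) :
    Finite N.Q ∧ Nat.card N.Q < Nat.card M.Q := by
  obtain ⟨φ, hφ, hrange, -⟩ := hN
  have finite : Finite N.Q := .of_injective φ hφ
  refine ⟨finite, (Nat.card_le_card_of_injective φ hφ).lt_of_ne fun hcard => ?_⟩
  have := (Nat.bijective_iff_injective_and_card φ).2 ⟨hφ, hcard⟩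
  exact hrange.subset (this.2 q) rfl

theorem exists_normalForm {R : Autom A → Autom A → Prop}
    (hR : ∀ M N, Finite M.Q → R M N → Finite N.Q ∧ Nat.card N.Q < Nat.card M.Q) (M : Autom A)
    [Finite M.Q] : ∃ N, ReflTransGen R M N ∧ Finite N.Q ∧ ∀ N', ¬R N N' := by
  induction hn : Nat.card M.Q using Nat.strong_induction_on generalizing M with
  | _ n ih =>
    by_cases hM : ∃ M', R M M'
    · obtain ⟨M', hMM'⟩ := hM
      obtain ⟨finite, hlt⟩ := hR M M' ‹_› hMM'
      obtain ⟨N, hN, hN'⟩ := ih _ (hn ▸ hlt) M' rfl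
      exact ⟨N, .head hMM' hN, hN'⟩
    · exact ⟨M, .refl, ‹_›, not_exists.1 hM⟩

theorem deterministic_of_forall_not_red1 (hM : ∀ N, ¬Red1 M N) : M.Deterministic := by
  intro r a p q hp hq
  by_contra hpq
  obtain ⟨N, hN⟩ := exists_isIdentification hpq
  exact hM N ⟨p, q, r, a, hpq, hp, hq, hN⟩

theorem exists_reductionOf (M : Autom A) [Finite M.Q] : ∃ N, ReductionOf M N ∧ Finite N.Q := by
  obtain ⟨M₁, hM₁, _, hM₁'⟩ := exists_normalForm (R := Red1)
    (fun _ _ _ ⟨_, _, _, _, hpq, _, _, hN⟩ => hN.finite_and_card_lt hpq) M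
  obtain ⟨N, hN, hfin, hN'⟩ := exists_normalForm (R := Red2)
    (fun _ _ _ ⟨_, _, _, _, _, _, _, hN⟩ => hN.finite_and_card_lt) M₁
  exact ⟨N, ⟨M₁, hM₁, deterministic_of_forall_not_red1 hM₁', hN, hN'⟩, hfin⟩

end Existence

end Autom

namespace Autom

variable {A : Type} {M : Autom A} {H L : Subgroup (FreeGroup A)} {q r : M.Q} {a b : Ltr A}
  {U V W : List (Ltr A)}

section ReducedLoops

/-- The state `q` lies on a reduced loop, that is, a path with reduced label from the initial state
to itself. -/
def OnReducedLoop (M : Autom A) (q : M.Q) : Prop :=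
  ∃ U V, FreeGroup.IsReduced (U ++ V) ∧ M.Path M.q0 U q ∧ M.Path q V M.q0

theorem isRed_iff : M.IsRed ↔ ∀ q, M.OnReducedLoop q := by
  simp only [IsRed, OnReducedLoop, isReducedWord_iff]

/-- `W` labels a shortest path from the initial state to `q`. -/
def IsGeodesic (M : Autom A) (W : List (Ltr A)) (q : M.Q) : Prop :=
  M.Path M.q0 W q ∧ ∀ V, M.Path M.q0 V q → W.length ≤ V.length

theorem Presents.exists_isGeodesic (hM : M.Presents H) (q : M.Q) : ∃ W, M.IsGeodesic W q := by
  obtain ⟨_, V, hV, -⟩ := hM.exists_connects q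
  obtain ⟨W, hW, hmin⟩ := (measure List.length).wf.has_min {W | M.Path M.q0 W q} ⟨V, hV⟩
  exact ⟨W, hW, fun V hV => not_lt.1 (hmin V hV)⟩

theorem IsGeodesic.isReduced (hW : M.IsGeodesic W q) (hdet : M.Deterministic) (hdual : M.Dual) :
    FreeGroup.IsReduced W := by
  obtain ⟨V, hV, hVW⟩ := exists_isReduced_mk_eq (FreeGroup.mk W)
  have hred := red_of_isReduced_of_mk_eq hV hVW.symm
  have hlen := hW.2 V (hW.1.red hdet hdual hred)
  rwa [← hred.sublist.eq_of_length_le hlen]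

theorem exists_edge_of_forall_not_red2 (hdet : M.Deterministic) (hdual : M.Dual)
    (hM : ∀ N, ¬Red2 M N) {p : M.Q} (hq : q ≠ M.q0) (he : (p, a, q) ∈ M.E) :
    ∃ b r, (q, b, r) ∈ M.E ∧ b ≠ a.inv := by
  by_contra! hedge
  obtain ⟨N, hN⟩ := exists_isDeletion hq
  have he' := (hdual _ _ _).1 he
  have eq_of_edge {c s} (hc : (q, c, s) ∈ M.E) : c = a.inv ∧ s = p := by
    obtain rfl := hedge c s hc
    exact ⟨rfl, hdet _ _ _ _ hc he'⟩
  refine hM N ⟨p, q, a, hq, he, he', ?_, hN⟩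
  rintro ⟨x, c, y⟩ hc (rfl | rfl)
  · obtain ⟨rfl, rfl⟩ := eq_of_edge hc
    exact .inr rfl
  · obtain ⟨hca, rfl⟩ := eq_of_edge ((hdual _ _ _).1 hc)
    rw [← c.inv_inv, hca, a.inv_inv]
    exact .inl rfl

theorem OnReducedLoop.of_edge (hr : M.OnReducedLoop r) (hdet : M.Deterministic) (hdual : M.Dual)
    (he : (q, b, r) ∈ M.E) :
    M.OnReducedLoop q ∨ ∃ V, M.Path r V M.q0 ∧ FreeGroup.IsReduced (b :: V) := by
  obtain ⟨X, Y, hXY, hX, hY⟩ := hr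
  rcases Y with _ | ⟨c, Y⟩
  · exact .inr ⟨[], hY, .singleton⟩
  by_cases hc : c = b.inv
  · obtain ⟨q', he', hY⟩ := path_cons_iff.1 hY
    obtain rfl : q' = q := hdet _ _ _ _ he' (hc ▸ (hdual _ _ _).1 he)
    exact .inl ⟨X ++ [c], Y, by simpa using hXY,
      path_append_iff.2 ⟨r, hX, path_singleton_iff.2 he'⟩, hY⟩
  · exact .inr ⟨c :: Y, hY, isReduced_cons_cons_iff.2 ⟨hc, isReduced_of_append_right hXY⟩⟩

theorem IsGeodesic.isReduced_cons_invRev (hV : M.IsGeodesic V r) (hdet : M.Deterministic)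
    (hdual : M.Dual) (hU : M.IsGeodesic U q) (hlen : V.length ≤ U.length)
    (he : (q, b, r) ∈ M.E) : FreeGroup.IsReduced (b :: FreeGroup.invRev V) := by
  have hred := isReduced_invRev (hV.isReduced hdet hdual)
  rcases V.eq_nil_or_concat' with rfl | ⟨V, c, rfl⟩
  · exact .singleton
  have hrev : FreeGroup.invRev (V ++ [c]) = c.inv :: FreeGroup.invRev V := FreeGroup.invRev_append
  rw [hrev] at hred ⊢
  refine isReduced_cons_cons_iff.2 ⟨fun hcb => ?_, hred⟩
  obtain rfl : c = b := by rw [← c.inv_inv, hcb, b.inv_inv]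
  obtain ⟨q', hV', he'⟩ := path_append_iff.1 hV.1
  obtain rfl : q' = q :=
    hdet _ _ _ _ ((hdual _ _ _).1 (path_singleton_iff.1 he')) ((hdual _ _ _).1 he)
  have := hU.2 V hV'
  rw [List.length_append, List.length_singleton] at hlen
  lia

theorem Presents.onReducedLoop_of_isGeodesic (hM : M.Presents H) (hdet : M.Deterministic)
    (hred : ∀ N, ¬Red2 M N) (hU : M.IsGeodesic U q)
    (hfar : ∀ r V, M.IsGeodesic V r → U.length < V.length → M.OnReducedLoop r) :
    M.OnReducedLoop q := by
  by_cases hq : q = M.q0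
  · subst hq
    exact ⟨[], [], .nil, .nil _, .nil _⟩
  rcases U.eq_nil_or_concat' with rfl | ⟨U, a, rfl⟩
  · exact absurd (path_nil_iff.1 hU.1).symm hq
  obtain ⟨p, -, he⟩ := path_append_iff.1 hU.1
  obtain ⟨b, r, hbr, hba⟩ :=
    exists_edge_of_forall_not_red2 hdet hM.dual hred hq (path_singleton_iff.1 he)
  suffices M.OnReducedLoop q ∨ ∃ V, M.Path r V M.q0 ∧ FreeGroup.IsReduced (b :: V) by
    refine this.elim id fun ⟨V, hV, hbV⟩ =>
      ⟨U ++ [a], b :: V, ?_, hU.1, path_cons_iff.2 ⟨r, hbr, hV⟩⟩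
    refine isReduced_append (hU.isReduced hdet hM.dual) hbV fun U' c V' hUc hbc => hba ?_
    rw [(List.cons.inj hbc).1, List.singleton_inj.1 (List.append_inj_right' hUc rfl)]
  obtain ⟨V, hV⟩ := hM.exists_isGeodesic r
  rcases lt_or_ge (U ++ [a]).length V.length with hlt | hle
  · exact (hfar r V hV hlt).of_edge hdet hM.dual hbr
  · exact .inr ⟨_, hV.1.invRev hM.dual, hV.isReduced_cons_invRev hdet hM.dual hU hle hbr⟩

theorem Presents.isRed (hM : M.Presents H) (hdet : M.Deterministic) (hred : ∀ N, ¬Red2 M N)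
    [Finite M.Q] : M.IsRed := by
  choose W hW using hM.exists_isGeodesic
  rw [isRed_iff]
  by_contra! hloop
  obtain ⟨q, hq, hmax⟩ := Set.exists_max_image {q | ¬M.OnReducedLoop q} (fun q => (W q).length)
    (Set.toFinite _) hloop
  refine hq (hM.onReducedLoop_of_isGeodesic hdet hred (hW q) fun r V hV hlt => ?_)
  by_contra hr
  exact (hlt.trans_le (hV.2 _ (hW r).1)).not_ge (hmax r hr)

end ReducedLoops

theorem Represents.exists_iStepAny [Finite M.Q] (hM : M.Represents L) {x y : FreeGroup A}
    (hx : x ∈ coreTree L) (hy : y ∈ coreTree L) (hxy : x * y⁻¹ ∉ L) :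
    ∃ N : Autom A, Finite N.Q ∧ IStepAny M N ∧ N.Represents (L ⊔ Subgroup.zpowers (x * y⁻¹)) := by
  have hdet := hM.1.1
  obtain ⟨p, hp⟩ := hM.presents.exists_connects_of_mem_coreTree hdet hx
  obtain ⟨q, hq⟩ := hM.presents.exists_connects_of_mem_coreTree hdet hy
  have hpq : p ≠ q := by
    rintro rfl
    exact hxy (hM.presents.mul_inv_mem hp hq)
  obtain ⟨M', hM'⟩ := exists_isIdentification hpq
  obtain ⟨_, -⟩ := hM'.finite_and_card_lt hpq
  obtain ⟨N, hN, hfin⟩ := exists_reductionOf M'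
  obtain ⟨hpres, hdetN⟩ := (hM.presents.identification hM' hp hq).reductionOf hN
  obtain ⟨-, -, -, -, hred⟩ := id hN
  refine ⟨N, hfin, ⟨p, q, hpq, M', N, hM', hN, .refl _, ?_, ?_⟩,
    hpres.represents hdetN (hpres.isRed hdetN hred)⟩
  · exact ⟨rfl, fun _ _ _ => id⟩
  · exact ⟨rfl, fun _ _ _ => id⟩

end Autom

namespace Autom

variable {A : Type} {H K L : Subgroup (FreeGroup A)} {f : ℕ → Autom A} {k : ℕ}

theorem Presents.generatedOver_of_iSteps (hH : (f 0).Presents H)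
    (hf : ∀ i < k, IStepAny (f i) (f (i + 1))) (hL : (f k).Presents L) : GeneratedOver k H L := by
  suffices ∃ L', (f k).Presents L' ∧ GeneratedOver k H L' by
    obtain ⟨L', hL', hgen⟩ := this
    exact hL.subgroup_unique hL' ▸ hgen
  clear hL
  induction k with
  | zero => exact ⟨H, hH, generatedOver_zero_iff.2 rfl⟩
  | succ k ih =>
    obtain ⟨L', hL', hgen⟩ := ih fun i hi => hf i (hi.trans k.lt_succ_self)
    obtain ⟨t, ht⟩ := hL'.iStepAny (hf k k.lt_succ_self)
    exact ⟨_, ht, hgen.sup_zpowers t⟩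

theorem Represents.exists_iSteps {M : Autom A} [Finite M.Q] (hM : M.Represents H)
    (hHK : GeneratedOver k H K) :
    ∃ j ≤ k, ∃ (f : ℕ → Autom A) (L : Subgroup (FreeGroup A)), f 0 = M ∧ (f j).Represents L ∧
      (∀ i < j, IStepAny (f i) (f (i + 1))) ∧ GeneratedOver (k - j) L K ∧
      QuotientEmbeds (coreTree L) L K := by
  induction k using Nat.strong_induction_on generalizing M H with
  | _ k ih =>
    by_cases hK : QuotientEmbeds (coreTree H) H K
    · exact ⟨0, k.zero_le, fun _ => M, H, rfl, hM, by simp, hHK, hK⟩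
    obtain ⟨k, rfl, x, hx, y, hy, hxy, hgen⟩ := exists_identification hHK hK
    obtain ⟨N, _, hMN, hN⟩ := hM.exists_iStepAny hx hy hxy
    obtain ⟨j, hj, f, L, rfl, hL, hf, hLK⟩ := ih k k.lt_succ_self hN hgen
    refine ⟨j + 1, Nat.succ_le_succ hj, fun i => Nat.casesOn i M f, L, rfl, hL, ?_, ?_⟩
    · rintro (_ | i) hi
      · exact hMN
      · exact hf i (Nat.lt_of_succ_lt_succ hi)
    · rwa [Nat.add_sub_add_right]

end Autom

/-- Corollary 3.2: with `d = rank K - rank H > 0`, `H ≤ff K` iff `Γ_A(H)` can be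
transformed by `d' ≤ d` i-steps into `Γ_A(L)` for some `L` with
`rank L = rank H + d'` which is a graphical free factor of `K`. -/
theorem free_factor_iff_isteps_to_graphical
    {A : Type} (H K : Subgroup (FreeGroup A)) (hHfg : H.FG) (hKfg : K.FG)
    (d : ℕ) (hd : 0 < d) (hrank : rk K = rk H + d) :
    FreeFactor H K ↔
      ∃ d' ≤ d, ∃ (f : ℕ → Autom A) (L : Subgroup (FreeGroup A)),
        (f 0).Represents H ∧ (f d').Represents L ∧
        (∀ i < d', Autom.IStepAny (f i) (f (i + 1))) ∧
        rk L = rk H + d' ∧ GraphicalFF L K := by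
  constructor
  · rintro ⟨B, C, hB, hC, hBC⟩
    have hHK := GeneratedOver.of_isFreeBasis hB hC hBC (hC.finite_of_fg hKfg) hrank
    have := Autom.stallings_finite hHfg
    obtain ⟨d', hd', f, L, h0, hL, hf, hLK, hembeds⟩ :=
      (Autom.stallings_represents H).exists_iSteps hHK
    have hH : (f 0).Represents H := h0 ▸ Autom.stallings_represents H
    have hHL := hH.presents.generatedOver_of_iSteps hf hL.presents
    have rk_L_le : rk L ≤ rk H + d' := hHL.rk_le hHfg
    have rk_K_le : rk K ≤ rk L + (d - d') := hLK.rk_le (hHL.fg hHfg)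
    exact ⟨d', hd', f, L, hH, hL, hf, by lia, (graphicalFF_iff hLK.le).2 hembeds⟩
  · rintro ⟨d', -, f, L, hH, hL, hf, hrk, hgraphical⟩
    have hHL := hH.presents.generatedOver_of_iSteps hf hL.presents
    have hembeds := (graphicalFF_iff hgraphical.1).1 hgraphical
    exact (hHL.freeFactor hHfg hrk).trans (freeFactor_of_quotientEmbeds hgraphical.1 hembeds)
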